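/- Sharp Sobolev inequality on the hyperbolic plane (Theorem 3.2, inequality part): Let k > 1/2 and q ≥ 2 be real numbers with kq > 2, and set p = q + 1/k. Let f : D → ℂ be bounded with lim_{|ζ|→1} f(ζ) = 0, such that |f|^{q/2} is weakly differentiable with ∫_D |∇(|f|^{q/2})|² dA < ∞ and ∫_D |f|^p dν_k < ∞. Then ∫_D |f|^q dν_k + (4/(kq(kq−2))) · ((2k−1)/(4π)) ∫_D |∇(|f|^{q/2})|² dA ≥ ((2k−1)/(kq−1)) · ((kp−1)/(2k−1))^{q/p} · ((kq−1)/(kq−2)) · (∫_D |f|^p dν_k)^{q/p}. -/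

import Mathlib

open MeasureTheory Metric

/-- The measure `ν_k` on the unit disc `D ⊆ ℂ`, with density
`((2k−1)/π)(1−|ζ|²)^{−2}` with respect to Lebesgue measure. -/
noncomputable def nuMeasure (k : ℝ) : Measure ℂ :=
  (volume.restrict (ball (0 : ℂ) 1)).withDensity
    (fun ζ => ENNReal.ofReal ((2 * k - 1) / Real.pi * ((1 - ‖ζ‖ ^ 2) ^ 2)⁻¹))

/-!
Let `M` be the hyperbolic distribution function of `u` and fix `t < u z`. On a geodesic ray from
`z` the set `{u > t}` lies before the last point at which `u = t`, so `1 + M t` is at most the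
average over the rays of `1 + V` at these points, `V` being the area of the disc about `z` they
bound. Integrating over `t` and `z` turns this into an integral of `∇u` against a kernel in `z`,
whose integral over a set of area `m` is at most the isoperimetric profile `√(m (1 + m))` by the
bathtub principle. With AM-GM this yields, for every weight `β ≥ 0` with `β 0 = 0`,
`8 ∫ β(t) √(M(t) (1 + M(t))) dt ≤ (1/π) ∫ |∇u|² + 4 ∫ β(u)²`.

For `u` with `∫ u ^ (2 + 2 / s) = 1 / s`, a weight `β` built from the mass of `u` above each level
reduces the theorem to a pointwise inequality for the decreasing rearrangement, with equality for
`(1 + m) ^ (-s / 2)`. Scaling `u` removes the normalisation, and `u = ‖f‖ ^ (q / 2)` with `s = k q`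
gives the theorem.
-/

section Rearrangement

variable {α : Type*} [MeasurableSpace α] {μ : Measure α} {u : α → ℝ}

/-- The distribution function `t ↦ μ {u > t}`. -/
noncomputable def distributionFunction (μ : Measure α) (u : α → ℝ) (t : ℝ) : ENNReal :=
  μ {x | t < u x}

/-- The decreasing rearrangement of `u` on `[0, ∞)`; only the positive values of `u` count, so it
is nonnegative. -/
noncomputable def decreasingRearrangement (μ : Measure α) (u : α → ℝ) (m : ℝ) : ℝ :=
  sSup {t : ℝ | 0 ≤ t ∧ ENNReal.ofReal m < distributionFunction μ u t}

lemma antitone_distributionFunction : Antitone (distributionFunction μ u) :=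
  fun _ _ hab => measure_mono fun _ hx => hab.trans_lt hx

lemma exists_gt_lt_distributionFunction {t : ℝ} {r : ENNReal}
    (h : r < distributionFunction μ u t) : ∃ t' > t, r < distributionFunction μ u t' := by
  obtain ⟨x, hanti, hgt, hlim⟩ := exists_seq_strictAnti_tendsto t
  have hunion : {y | t < u y} = ⋃ n, {y | x n < u y} := by
    ext y
    rw [Set.mem_iUnion]
    exact ⟨fun hy => (hlim.eventually_lt_const hy).exists, fun ⟨n, hn⟩ => (hgt n).trans hn⟩
  have hmono : Monotone fun n => {y | x n < u y} :=
    fun _ _ hab _ hy => (hanti.antitone hab).trans_lt hy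
  rw [distributionFunction, hunion, hmono.measure_iUnion] at h
  obtain ⟨n, hn⟩ := lt_iSup_iff.1 h
  exact ⟨x n, hgt n, hn⟩

lemma distributionFunction_ne_top_of_lintegral_rpow {p : ℝ} (hp : 0 < p) (hu : Measurable u)
    (h : ∫⁻ x, ENNReal.ofReal (u x ^ p) ∂μ ≠ ⊤) {t : ℝ} (ht : 0 < t) :
    distributionFunction μ u t ≠ ⊤ := by
  have hsub : {x | t < u x} ⊆ {x | ENNReal.ofReal (t ^ p) ≤ ENNReal.ofReal (u x ^ p)} :=
    fun x hx => ENNReal.ofReal_le_ofReal (Real.rpow_le_rpow ht.le (le_of_lt hx) hp.le)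
  refine ((measure_mono hsub).trans (meas_ge_le_lintegral_div (by fun_prop) ?_ ?_)).trans_lt
    (ENNReal.div_lt_top h ?_) |>.ne
  · exact (ENNReal.ofReal_pos.2 (Real.rpow_pos_of_pos ht p)).ne'
  · exact ENNReal.ofReal_ne_top
  · exact (ENNReal.ofReal_pos.2 (Real.rpow_pos_of_pos ht p)).ne'

lemma lintegral_mul_distributionFunction [SFinite μ] {A : ℝ → ENNReal} (hA : Measurable A)
    (hu : Measurable u) :
    ∫⁻ t in Set.Ioi (0 : ℝ), A t * distributionFunction μ u t =
      ∫⁻ x, (∫⁻ t in Set.Ioo 0 (u x), A t) ∂μ := by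
  have hinner : ∀ x, ∫⁻ t in Set.Ioo 0 (u x), A t =
      ∫⁻ t in Set.Ioi 0, {y | t < u y}.indicator (fun _ => A t) x := by
    intro x
    rw [← lintegral_indicator measurableSet_Ioo, ← lintegral_indicator measurableSet_Ioi]
    congr with t
    by_cases ht : 0 < t <;> by_cases htu : t < u x <;> simp [Set.indicator, ht, htu]
  have hmeas : Measurable fun p : α × ℝ => {y | p.2 < u y}.indicator (fun _ => A p.2) p.1 :=
    (hA.comp measurable_snd).indicator
      (measurableSet_lt measurable_snd (hu.comp measurable_fst))
  simp_rw [hinner]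
  rw [lintegral_lintegral_swap hmeas.aemeasurable]
  congr with t
  rw [lintegral_indicator_const (measurableSet_lt measurable_const hu)]
  rfl

lemma decreasingRearrangement_nonneg (m : ℝ) : 0 ≤ decreasingRearrangement μ u m :=
  Real.sSup_nonneg fun _ hx => hx.1

lemma lt_decreasingRearrangement_iff (hb : BddAbove (Set.range u)) {m t : ℝ} (ht : 0 ≤ t) :
    t < decreasingRearrangement μ u m ↔ ENNReal.ofReal m < distributionFunction μ u t := by
  constructor
  · intro h
    have hne : {t : ℝ | 0 ≤ t ∧ ENNReal.ofReal m < distributionFunction μ u t}.Nonempty :=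
      Set.nonempty_iff_ne_empty.2 fun hempty => by
        rw [decreasingRearrangement, hempty, Real.sSup_empty] at h
        exact ht.not_gt h
    obtain ⟨t', ht', htt'⟩ := exists_lt_of_lt_csSup hne h
    exact ht'.2.trans_le (antitone_distributionFunction htt'.le)
  · intro h
    obtain ⟨t', htt', h'⟩ := exists_gt_lt_distributionFunction h
    obtain ⟨C, hC⟩ := hb
    refine htt'.trans_le (le_csSup ⟨C, fun r hr => ?_⟩ ⟨ht.trans htt'.le, h'⟩)
    obtain ⟨x, hx : r < u x⟩ := nonempty_of_measure_ne_zero (pos_of_gt hr.2).ne'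
    exact hx.le.trans (hC (Set.mem_range_self x))

lemma antitone_decreasingRearrangement (hb : BddAbove (Set.range u)) :
    Antitone (decreasingRearrangement μ u) := by
  refine fun a b hab => le_of_forall_lt fun t ht => ?_
  rcases lt_or_ge t 0 with h0 | h0
  · exact h0.trans_le (decreasingRearrangement_nonneg a)
  · rw [lt_decreasingRearrangement_iff hb h0] at ht ⊢
    exact (ENNReal.ofReal_le_ofReal hab).trans_lt ht

lemma continuousWithinAt_decreasingRearrangement (hb : BddAbove (Set.range u)) (m : ℝ) :
    ContinuousWithinAt (decreasingRearrangement μ u) (Set.Ici m) m := by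
  have hanti := antitone_decreasingRearrangement (μ := μ) hb
  refine tendsto_order.2 ⟨fun t ht => ?_, fun t ht => ?_⟩
  · rcases lt_or_ge t 0 with h0 | h0
    · exact .of_forall fun x => h0.trans_le (decreasingRearrangement_nonneg x)
    · rw [lt_decreasingRearrangement_iff hb h0] at ht
      have hcont := (ENNReal.continuous_ofReal.tendsto m).eventually_lt_const ht
      filter_upwards [mem_nhdsWithin_of_mem_nhds hcont] with x hx
      exact (lt_decreasingRearrangement_iff hb h0).2 hx
  · filter_upwards [self_mem_nhdsWithin] with x hx
    exact (hanti hx).trans_lt ht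

lemma volume_setOf_ofReal_lt (M : ENNReal) :
    volume {m : ℝ | 0 < m ∧ ENNReal.ofReal m < M} = M := by
  rcases eq_or_ne M ⊤ with rfl | hM
  · simp only [ENNReal.ofReal_lt_top, and_true]
    exact Real.volume_Ioi
  · have : {m : ℝ | 0 < m ∧ ENNReal.ofReal m < M} = Set.Ioo 0 M.toReal :=
      Set.ext fun m => and_congr_right fun hm => ENNReal.ofReal_lt_iff_lt_toReal hm.le hM
    rw [this, Real.volume_Ioo, sub_zero, ENNReal.ofReal_toReal hM]

lemma map_decreasingRearrangement_Ioi (hu : Measurable u) (hb : BddAbove (Set.range u)) {t : ℝ}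
    (ht : 0 ≤ t) :
    (volume.restrict (Set.Ioi 0)).map (decreasingRearrangement μ u) (Set.Ioi t) =
      μ.map u (Set.Ioi t) := by
  have hU := (antitone_decreasingRearrangement (μ := μ) hb).measurable
  rw [Measure.map_apply hu measurableSet_Ioi, Measure.map_apply hU measurableSet_Ioi,
    Measure.restrict_apply (hU measurableSet_Ioi)]
  refine Eq.trans (congrArg volume ?_) (volume_setOf_ofReal_lt (distributionFunction μ u t))
  ext m
  exact and_comm.trans (and_congr_right' (lt_decreasingRearrangement_iff hb ht))

lemma restrict_map_decreasingRearrangement (hu : Measurable u) (hb : BddAbove (Set.range u))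
    (hfin : ∀ t > 0, distributionFunction μ u t ≠ ⊤) :
    ((volume.restrict (Set.Ioi 0)).map (decreasingRearrangement μ u)).restrict (Set.Ioi 0) =
      (μ.map u).restrict (Set.Ioi 0) := by
  obtain ⟨ε, -, hpos, hlim⟩ := exists_seq_strictAnti_tendsto (0 : ℝ)
  have hunion : Set.Ioi (0 : ℝ) = ⋃ n, Set.Ioi (ε n) := by
    ext y
    rw [Set.mem_iUnion]
    exact ⟨fun hy => (hlim.eventually_lt_const hy).exists, fun ⟨n, hn⟩ => (hpos n).trans hn⟩
  have hval {t : ℝ} (ht : 0 ≤ t) := map_decreasingRearrangement_Ioi (μ := μ) hu hb ht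
  generalize (volume.restrict (Set.Ioi 0)).map (decreasingRearrangement μ u) = ν at hval ⊢
  rw [hunion, Measure.restrict_iUnion_congr]
  intro n
  have : IsFiniteMeasure (ν.restrict (Set.Ioi (ε n))) := by
    constructor
    rw [Measure.restrict_apply_univ, hval (hpos n).le, Measure.map_apply hu measurableSet_Ioi]
    exact (hfin _ (hpos n)).lt_top
  refine ext_of_generate_finite _ (BorelSpace.measurable_eq.trans (borel_eq_generateFrom_Ioi ℝ))
    isPiSystem_Ioi ?_ ?_
  · rintro _ ⟨a, rfl⟩
    simp only [Measure.restrict_apply measurableSet_Ioi, Set.Ioi_inter_Ioi]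
    exact hval ((hpos n).le.trans (le_max_right _ _))
  · simp only [Measure.restrict_apply_univ]
    exact hval (hpos n).le

lemma lintegral_comp_decreasingRearrangement (hu : Measurable u) (hb : BddAbove (Set.range u))
    (hu0 : ∀ x, 0 ≤ u x) (hfin : ∀ t > 0, distributionFunction μ u t ≠ ⊤) {φ : ℝ → ENNReal}
    (hφ : Measurable φ) (hφ0 : φ 0 = 0) :
    ∫⁻ m in Set.Ioi 0, φ (decreasingRearrangement μ u m) = ∫⁻ x, φ (u x) ∂μ := by
  have hind : ∀ t, 0 ≤ t → φ t = (Set.Ioi 0).indicator φ t := by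
    intro t ht
    rcases ht.eq_or_lt with rfl | ht
    · rw [hφ0, Set.indicator_of_notMem Set.self_notMem_Ioi]
    · rw [Set.indicator_of_mem (Set.mem_Ioi.2 ht)]
  have hU := (antitone_decreasingRearrangement (μ := μ) hb).measurable
  simp_rw [hind _ (hu0 _), hind _ (decreasingRearrangement_nonneg _)]
  have hφ' := hφ.indicator (measurableSet_Ioi (a := (0 : ℝ)))
  rw [← lintegral_map hφ' hU, ← lintegral_map hφ' hu, lintegral_indicator measurableSet_Ioi,
    lintegral_indicator measurableSet_Ioi, restrict_map_decreasingRearrangement hu hb hfin]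

end Rearrangement

/-! ### Scalar inequalities -/

lemma add_one_mul_le_rpow_div_rpow_add {s x v : ℝ} (hs : 0 ≤ s) (hx : 0 < x) (hv : 0 < v) :
    (s + 1) * x ≤ x ^ (s + 1) / v ^ s + s * v := by
  have bernoulli : 1 + (s + 1) * (x / v - 1) ≤ (1 + (x / v - 1)) ^ (s + 1) :=
    one_add_mul_self_le_rpow_one_add (by linarith [div_pos hx hv]) (by linarith)
  rw [add_sub_cancel, Real.div_rpow hx.le hv.le, Real.rpow_add_one hv.ne' s] at bernoulli
  calc (s + 1) * x = v * (1 + (s + 1) * (x / v - 1)) + s * v := by field_simp; ring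
    _ ≤ v * (x ^ (s + 1) / (v ^ s * v)) + s * v := by gcongr
    _ = x ^ (s + 1) / v ^ s + s * v := by field_simp

lemma mul_rpow_inv_le_two_mul_sqrt_add {s w : ℝ} (hs : 2 ≤ s) (hw : 0 < w) :
    s * w ^ (1 / s) ≤ 2 * √w + s - 2 := by
  have bernoulli : 1 + s / 2 * (w ^ (1 / s) - 1) ≤ (1 + (w ^ (1 / s) - 1)) ^ (s / 2) :=
    one_add_mul_self_le_rpow_one_add (by linarith [Real.rpow_pos_of_pos hw (1 / s)]) (by linarith)
  rw [add_sub_cancel, ← Real.rpow_mul hw.le, show 1 / s * (s / 2) = 1 / 2 by field_simp,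
    ← Real.sqrt_eq_rpow] at bernoulli
  linarith

lemma two_mul_mul_le_of_sq_mul_pow_four_eq {m e v : ℝ} (hm : 0 < m) (he : 0 < e)
    (hv : e ^ 2 * v ^ 4 * (m * (1 + m)) = 1 - e) :
    2 * (e * v) ≤ (2 * m + 1) * (e * v ^ 2) - 2 * (1 - e) + 1 / (1 + m) := by
  -- The difference of the two sides is a sum of squares once multiplied by `1 + e (1 + m) v²`.
  have sum_of_squares :
      (1 + e * (1 + m) * v ^ 2) *
          ((2 * m + 1) * (e * v ^ 2) - 2 * (1 - e) + 1 / (1 + m) - 2 * (e * v)) =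
        e ^ 2 * (1 + m) * ((1 / (e * (1 + m)) - v) ^ 2 + v ^ 2 * (1 - v) ^ 2) := by
    field_simp
    linear_combination (2 * (1 + m)) * hv
  have right_nonneg :
      0 ≤ e ^ 2 * (1 + m) * ((1 / (e * (1 + m)) - v) ^ 2 + v ^ 2 * (1 - v) ^ 2) := by positivity
  exact sub_nonneg.1 (nonneg_of_mul_nonneg_right (right_nonneg.trans sum_of_squares.ge)
    (by positivity))

lemma two_add_mul_le_of_lt_one {s m e y : ℝ} (hs : 2 ≤ s) (hm : 0 < m) (he : 0 < e) (he1 : e < 1)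
    (hy : 0 < y) :
    2 + (s + 1 / (s + 1)) * y ≤
      (2 * m + 1) * √(1 - e) / √(m * (1 + m)) +
        e ^ (1 - s) * y ^ (s + 1) * √(m * (1 + m)) / √(1 - e) + s * e +
        1 / (s + 1) * ((1 + m) ^ (-(s + 1)) * y ^ (-s)) := by
  have hs0 : 0 ≤ s := by linarith
  have hb : 0 < 1 + m := by positivity
  have hS : 0 < √(m * (1 + m)) := Real.sqrt_pos.2 (by positivity)
  have hQ : 0 < √(1 - e) := Real.sqrt_pos.2 (by linarith)
  set S := √(m * (1 + m)) with hSdef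
  set Q := √(1 - e) with hQdef
  set w := Q / (e * S) with hw
  have hw0 : 0 < w := by positivity
  have young_y : (s + 1) * y ≤ e ^ (1 - s) * y ^ (s + 1) * S / Q + s * (e * w ^ (1 / s)) := by
    have h := add_one_mul_le_rpow_div_rpow_add hs0 hy
      (mul_pos he (Real.rpow_pos_of_pos hw0 (1 / s)))
    rw [Real.mul_rpow he.le (by positivity), ← Real.rpow_mul hw0.le,
      one_div_mul_cancel (by linarith), Real.rpow_one] at h
    convert h using 2
    rw [Real.rpow_sub he, Real.rpow_one, hw]
    field_simp
  have young_inv : (s + 1) * (1 / (1 + m)) ≤ (1 + m) ^ (-(s + 1)) * y ^ (-s) + s * y := by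
    have h := add_one_mul_le_rpow_div_rpow_add hs0 (inv_pos.2 hb) hy
    rwa [Real.inv_rpow hb.le, ← Real.rpow_neg hb.le, div_eq_mul_inv, ← Real.rpow_neg hy.le,
      ← one_div] at h
  have bernoulli := mul_le_mul_of_nonneg_left (mul_rpow_inv_le_two_mul_sqrt_add hs hw0) he.le
  have squares : 2 * (e * √w) ≤ (2 * m + 1) * (Q / S) - 2 * (1 - e) + 1 / (1 + m) := by
    have h := two_mul_mul_le_of_sq_mul_pow_four_eq (v := √w) hm he (by
      rw [show √w ^ 4 = (√w ^ 2) ^ 2 by ring, Real.sq_sqrt hw0.le, hw,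
        ← Real.sq_sqrt (by positivity : 0 ≤ m * (1 + m)), ← hSdef,
        ← Real.sq_sqrt (by linarith : 0 ≤ 1 - e), ← hQdef]
      field_simp)
    rwa [Real.sq_sqrt hw0.le, show e * w = Q / S by rw [hw]; field_simp] at h
  have := mul_le_mul_of_nonneg_left young_inv (by positivity : 0 ≤ 1 / (s + 1))
  have hcancel : 1 / (s + 1) * ((s + 1) * (1 / (1 + m))) = 1 / (1 + m) := by field_simp
  have hsplit : 1 / (s + 1) * (s * y) = (1 - 1 / (s + 1)) * y := by field_simp; ring
  rw [mul_div_assoc]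
  linarith

/-! ### Normalised decreasing profiles -/

/-- The isoperimetric profile of the hyperbolic plane, in units in which the disc of Euclidean
radius `r` centred at the origin has area `m = r² / (1 - r²)`. -/
noncomputable def isoProfile (m : ℝ) : ℝ := √(m * (1 + m))

/-- For a decreasing profile `U` on `[0, ∞)` of total mass `∫ U ^ (2 + 2 / s) = 1 / s`, the
fraction of the mass carried by `[m, ∞)`. -/
noncomputable def tailMass (s : ℝ) (U : ℝ → ℝ) (m : ℝ) : ℝ :=
  1 - s * ∫ τ in (0 : ℝ)..m, U τ ^ (2 + 2 / s)

/-- The cut-off `√(1 - I ^ (1 / s))` by which the isoperimetric profile is weighted, `I` being the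
tail mass. -/
noncomputable def massCutoff (s : ℝ) (U : ℝ → ℝ) (m : ℝ) : ℝ :=
  √(1 - tailMass s U m ^ (1 / s))

/-- The right derivative of `isoProfile * massCutoff s U` where `U` does not vanish. -/
noncomputable def cutoffIsoDeriv (s : ℝ) (U : ℝ → ℝ) (m : ℝ) : ℝ :=
  (2 * m + 1) / (2 * isoProfile m) * massCutoff s U m +
    isoProfile m *
      (tailMass s U m ^ (1 / s - 1) * U m ^ (2 + 2 / s) / (2 * massCutoff s U m))

/-- A nonnegative decreasing right-continuous profile normalised to `∫ U ^ (2 + 2 / s) = 1 / s`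
on `[0, ∞)`. The model is `U m = (1 + m) ^ (-s / 2)`, whose tail mass is `(1 + m) ^ (-s)`. -/
structure NormalizedProfile (s : ℝ) (U : ℝ → ℝ) : Prop where
  exponent_pos : 0 < s
  nonneg : ∀ m, 0 ≤ U m
  antitone : Antitone U
  rightContinuous : ∀ m, ContinuousWithinAt U (Set.Ici m) m
  mass : ∫⁻ m in Set.Ioi (0 : ℝ), ENNReal.ofReal (U m ^ (2 + 2 / s)) = ENNReal.ofReal (1 / s)

lemma isoProfile_pos {m : ℝ} (hm : 0 < m) : 0 < isoProfile m := Real.sqrt_pos.2 (by positivity)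

lemma continuous_isoProfile : Continuous isoProfile := by unfold isoProfile; fun_prop

lemma hasDerivAt_isoProfile {m : ℝ} (hm : 0 < m) :
    HasDerivAt isoProfile ((2 * m + 1) / (2 * isoProfile m)) m := by
  have hpoly : HasDerivAt (fun m : ℝ => m * (1 + m)) (2 * m + 1) m :=
    ((hasDerivAt_id m).mul ((hasDerivAt_id m).const_add 1)).congr_deriv (by simp only [id]; ring)
  exact hpoly.sqrt (by positivity)

lemma lintegral_one_add_rpow {s : ℝ} (hs : 0 < s) :
    ∫⁻ m in Set.Ioi (0 : ℝ), ENNReal.ofReal ((1 + m) ^ (-(s + 1))) = ENNReal.ofReal (1 / s) := by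
  have hshift := (measurePreserving_add_left volume (1 : ℝ)).setLIntegral_comp_preimage_emb
    (measurableEmbedding_addLeft 1) (fun x => ENNReal.ofReal (x ^ (-(s + 1)))) (Set.Ioi 1)
  rw [Set.preimage_const_add_Ioi, sub_self] at hshift
  rw [hshift, ← ofReal_integral_eq_lintegral_ofReal
      (integrableOn_Ioi_rpow_of_lt (by linarith) one_pos)
      ((ae_restrict_mem measurableSet_Ioi).mono fun x hx =>
        Real.rpow_nonneg (zero_le_one.trans (Set.mem_Ioi.1 hx).le) _),
    integral_Ioi_rpow_of_lt (by linarith) one_pos, Real.one_rpow,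
    show -(s + 1) + 1 = -s by ring, neg_div_neg_eq]

namespace NormalizedProfile

variable {s : ℝ} {U : ℝ → ℝ}

lemma power_pos (h : NormalizedProfile s U) : 0 < 2 + 2 / s := by
  have := h.exponent_pos
  positivity

lemma antitone_rpow (h : NormalizedProfile s U) : Antitone fun τ => U τ ^ (2 + 2 / s) :=
  fun _ _ hab => Real.rpow_le_rpow (h.nonneg _) (h.antitone hab) h.power_pos.le

lemma intervalIntegrable_rpow (h : NormalizedProfile s U) (a b : ℝ) :
    IntervalIntegrable (fun τ => U τ ^ (2 + 2 / s)) volume a b :=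
  h.antitone_rpow.intervalIntegrable

lemma tailMass_nonneg (h : NormalizedProfile s U) {m : ℝ} (hm : 0 ≤ m) : 0 ≤ tailMass s U m := by
  have hs := h.exponent_pos
  have hle : ∫ τ in (0 : ℝ)..m, U τ ^ (2 + 2 / s) ≤ 1 / s := by
    rw [← ENNReal.ofReal_le_ofReal_iff (by positivity), ← h.mass,
      intervalIntegral.integral_of_le hm,
      ofReal_integral_eq_lintegral_ofReal
        ((intervalIntegrable_iff_integrableOn_Ioc_of_le hm).1 (h.intervalIntegrable_rpow 0 m))
        (.of_forall fun τ => Real.rpow_nonneg (h.nonneg τ) _)]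
    exact lintegral_mono_set Set.Ioc_subset_Ioi_self
  rw [tailMass, sub_nonneg]
  simpa [hs.ne'] using mul_le_mul_of_nonneg_left hle hs.le

lemma tailMass_add_le (h : NormalizedProfile s U) {a b : ℝ} (hab : a ≤ b) :
    tailMass s U b + s * ((b - a) * U b ^ (2 + 2 / s)) ≤ tailMass s U a := by
  have hlower : (b - a) * U b ^ (2 + 2 / s) ≤ ∫ τ in a..b, U τ ^ (2 + 2 / s) := by
    rw [← smul_eq_mul, ← intervalIntegral.integral_const]
    exact intervalIntegral.integral_mono_on hab (by simp) (h.intervalIntegrable_rpow a b)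
      fun τ hτ => h.antitone_rpow hτ.2
  have hsplit := intervalIntegral.integral_add_adjacent_intervals
    (h.intervalIntegrable_rpow 0 a) (h.intervalIntegrable_rpow a b)
  have := mul_le_mul_of_nonneg_left hlower h.exponent_pos.le
  rw [tailMass, tailMass, ← hsplit]
  linarith

lemma antitone_tailMass (h : NormalizedProfile s U) : Antitone (tailMass s U) := by
  intro a b hab
  have := h.exponent_pos
  have := Real.rpow_nonneg (h.nonneg b) (2 + 2 / s)
  have := sub_nonneg.2 hab
  exact (le_add_of_nonneg_right (by positivity)).trans (h.tailMass_add_le hab)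

lemma tailMass_add_le_one (h : NormalizedProfile s U) {m : ℝ} (hm : 0 ≤ m) :
    tailMass s U m + s * (m * U m ^ (2 + 2 / s)) ≤ 1 := by
  simpa [tailMass] using h.tailMass_add_le hm

lemma tailMass_le_one (h : NormalizedProfile s U) {m : ℝ} (hm : 0 ≤ m) : tailMass s U m ≤ 1 := by
  simpa [tailMass] using h.antitone_tailMass hm

lemma tailMass_lt_one (h : NormalizedProfile s U) {m : ℝ} (hm : 0 < m) (hU : 0 < U m) :
    tailMass s U m < 1 := by
  have := h.exponent_pos
  exact (lt_add_of_pos_right _ (by positivity)).trans_le (h.tailMass_add_le_one hm.le)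

lemma tailMass_pos (h : NormalizedProfile s U) {m : ℝ} (hm : 0 ≤ m) (hU : 0 < U m) :
    0 < tailMass s U m := by
  have hs := h.exponent_pos
  have hright : ∀ᶠ x in nhdsWithin m (Set.Ioi m), 0 < U x :=
    ((h.rightContinuous m).mono Set.Ioi_subset_Ici_self).eventually (lt_mem_nhds hU)
  obtain ⟨x, hUx, hmx : m < x⟩ := (hright.and self_mem_nhdsWithin).exists
  have := sub_pos.2 hmx
  calc 0 ≤ tailMass s U x := h.tailMass_nonneg (hm.trans hmx.le)
    _ < tailMass s U x + s * ((x - m) * U x ^ (2 + 2 / s)) :=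
      lt_add_of_pos_right _ (by positivity)
    _ ≤ tailMass s U m := h.tailMass_add_le hmx.le

lemma tailMass_rpow_lt_one (h : NormalizedProfile s U) {m : ℝ} (hm : 0 < m) (hU : 0 < U m) :
    tailMass s U m ^ (1 / s) < 1 :=
  Real.rpow_lt_one (h.tailMass_nonneg hm.le) (h.tailMass_lt_one hm hU)
    (one_div_pos.2 h.exponent_pos)

lemma continuous_tailMass (h : NormalizedProfile s U) : Continuous (tailMass s U) := by
  unfold tailMass
  have := intervalIntegral.continuous_primitive h.intervalIntegrable_rpow 0
  fun_prop

lemma continuous_massCutoff (h : NormalizedProfile s U) : Continuous (massCutoff s U) :=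
  (continuous_const.sub (h.continuous_tailMass.rpow_const fun _ =>
    Or.inr (one_div_pos.2 h.exponent_pos).le)).sqrt

lemma hasDerivWithinAt_tailMass (h : NormalizedProfile s U) (m : ℝ) :
    HasDerivWithinAt (tailMass s U) (-(s * U m ^ (2 + 2 / s))) (Set.Ioi m) m := by
  have hcont : ContinuousWithinAt (fun τ => U τ ^ (2 + 2 / s)) (Set.Ioi m) m :=
    ((h.rightContinuous m).mono Set.Ioi_subset_Ici_self).rpow_const (Or.inr h.power_pos.le)
  have hprimitive := intervalIntegral.integral_hasDerivWithinAt_right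
    (h.intervalIntegrable_rpow 0 m) (s := Set.Ici m) (t := Set.Ioi m)
    h.antitone_rpow.measurable.stronglyMeasurable.stronglyMeasurableAtFilter hcont
  exact ((hprimitive.mono Set.Ioi_subset_Ici_self).const_mul s).const_sub 1

lemma hasDerivWithinAt_isoProfile_mul_massCutoff (h : NormalizedProfile s U) {m : ℝ} (hm : 0 < m)
    (hU : 0 < U m) :
    HasDerivWithinAt (fun m => isoProfile m * massCutoff s U m) (cutoffIsoDeriv s U m)
      (Set.Ioi m) m := by
  have hs := h.exponent_pos
  have hcutoff := (((h.hasDerivWithinAt_tailMass m).rpow_const (p := 1 / s)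
    (Or.inl (h.tailMass_pos hm.le hU).ne')).const_sub 1).sqrt
      (sub_pos.2 (h.tailMass_rpow_lt_one hm hU)).ne'
  refine ((hasDerivAt_isoProfile hm).hasDerivWithinAt.mul hcutoff).congr_deriv ?_
  rw [cutoffIsoDeriv, massCutoff]
  congr 2
  field_simp

lemma cutoffIsoDeriv_nonneg (h : NormalizedProfile s U) {m : ℝ} (hm : 0 < m) :
    0 ≤ cutoffIsoDeriv s U m := by
  have := h.tailMass_nonneg hm.le
  have := h.nonneg m
  have := isoProfile_pos hm
  have : 0 ≤ massCutoff s U m := Real.sqrt_nonneg _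
  unfold cutoffIsoDeriv
  positivity

lemma measurable_cutoffIsoDeriv (h : NormalizedProfile s U) : Measurable (cutoffIsoDeriv s U) := by
  have := h.continuous_tailMass.measurable
  have := h.antitone.measurable
  have := h.continuous_massCutoff.measurable
  have := continuous_isoProfile.measurable
  unfold cutoffIsoDeriv
  fun_prop

lemma lintegral_cutoffIsoDeriv_le (h : NormalizedProfile s U) {L : ℝ} (hL : 0 ≤ L)
    (hU : ∀ m ∈ Set.Ioo 0 L, 0 < U m) :
    ∫⁻ m in Set.Ioo 0 L, ENNReal.ofReal (cutoffIsoDeriv s U m) ≤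
      ENNReal.ofReal (isoProfile L * massCutoff s U L) := by
  have hcont := (continuous_isoProfile.mul h.continuous_massCutoff).continuousOn (s := Set.Icc 0 L)
  have hderiv : ∀ m ∈ Set.Ioo 0 L, HasDerivWithinAt (fun m => isoProfile m * massCutoff s U m)
      (cutoffIsoDeriv s U m) (Set.Ioi m) m :=
    fun m hm => h.hasDerivWithinAt_isoProfile_mul_massCutoff hm.1 (hU m hm)
  have hint := intervalIntegral.integrableOn_deriv_right_of_nonneg hcont hderiv
    fun m hm => h.cutoffIsoDeriv_nonneg hm.1
  have hftc := intervalIntegral.integral_eq_sub_of_hasDeriv_right_of_le hL hcont hderiv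
    ((intervalIntegrable_iff_integrableOn_Ioc_of_le hL).2 hint)
  rw [intervalIntegral.integral_of_le hL, integral_Ioc_eq_integral_Ioo] at hftc
  rw [← ofReal_integral_eq_lintegral_ofReal (hint.mono_set Set.Ioo_subset_Ioc_self)
    ((ae_restrict_mem measurableSet_Ioo).mono fun m hm => h.cutoffIsoDeriv_nonneg hm.1), hftc]
  simp [isoProfile]

lemma pointwise_inequality (h : NormalizedProfile s U) (hs : 2 ≤ s) {m : ℝ} (hm : 0 < m) :
    2 * U m ^ 2 + (s + 1 / (s + 1)) * U m ^ (2 + 2 / s) ≤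
      2 * (cutoffIsoDeriv s U m * U m ^ 2) + s * (tailMass s U m ^ (1 / s) * U m ^ 2) +
        1 / (s + 1) * (1 + m) ^ (-(s + 1)) := by
  have hs0 := h.exponent_pos
  rcases (h.nonneg m).eq_or_lt with hU | hU
  · rw [← hU, Real.zero_rpow h.power_pos.ne']
    norm_num
    positivity
  have hI := h.tailMass_pos hm.le hU
  have he : 0 < tailMass s U m ^ (1 / s) := by positivity
  have hy : 0 < U m ^ (2 / s) := by positivity
  have key := mul_le_mul_of_nonneg_left
    (two_add_mul_le_of_lt_one hs hm he (h.tailMass_rpow_lt_one hm hU) hy) (sq_nonneg (U m))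
  have hQ : 0 < √(1 - tailMass s U m ^ (1 / s)) :=
    Real.sqrt_pos.2 (sub_pos.2 (h.tailMass_rpow_lt_one hm hU))
  have hS : 0 < √(m * (1 + m)) := isoProfile_pos hm
  have hpow : U m ^ 2 * U m ^ (2 / s) = U m ^ (2 + 2 / s) := by
    rw [Real.rpow_add hU, Real.rpow_two]
  have hneg : U m ^ 2 * (U m ^ (2 / s)) ^ (-s) = 1 := by
    rw [← Real.rpow_mul hU.le, ← Real.rpow_two, ← Real.rpow_add hU]
    simp [hs0.ne']
  have hsucc : (U m ^ (2 / s)) ^ (s + 1) = U m ^ (2 + 2 / s) := by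
    rw [← Real.rpow_mul hU.le]; congr 1; field_simp
  have htail : (tailMass s U m ^ (1 / s)) ^ (1 - s) = tailMass s U m ^ (1 / s - 1) := by
    rw [← Real.rpow_mul hI.le]; congr 1; field_simp
  rw [hsucc, htail] at key
  calc _ = U m ^ 2 * (2 + (s + 1 / (s + 1)) * U m ^ (2 / s)) := by rw [← hpow]; ring
    _ ≤ _ := key
    _ = _ := by
      rw [cutoffIsoDeriv, massCutoff, isoProfile]
      generalize 1 / (s + 1) = c
      field_simp
      linear_combination
        (√(m * (1 + m)) * √(1 - tailMass s U m ^ (1 / s)) * c * (1 + m) ^ (-(s + 1))) * hneg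

lemma lintegral_inequality (h : NormalizedProfile s U) (hs : 2 ≤ s) :
    2 * (∫⁻ m in Set.Ioi (0 : ℝ), ENNReal.ofReal (U m ^ 2)) + 1 ≤
      2 * (∫⁻ m in Set.Ioi (0 : ℝ), ENNReal.ofReal (cutoffIsoDeriv s U m * U m ^ 2)) +
        ENNReal.ofReal s *
          ∫⁻ m in Set.Ioi (0 : ℝ), ENNReal.ofReal (tailMass s U m ^ (1 / s) * U m ^ 2) := by
  have hs0 := h.exponent_pos
  have hI := h.continuous_tailMass.measurable
  have hU := h.antitone.measurable
  have hn := h.measurable_cutoffIsoDeriv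
  have hpointwise : ∀ m ∈ Set.Ioi (0 : ℝ),
      2 * ENNReal.ofReal (U m ^ 2) +
          ENNReal.ofReal (s + 1 / (s + 1)) * ENNReal.ofReal (U m ^ (2 + 2 / s)) ≤
        2 * ENNReal.ofReal (cutoffIsoDeriv s U m * U m ^ 2) +
          ENNReal.ofReal s * ENNReal.ofReal (tailMass s U m ^ (1 / s) * U m ^ 2) +
          ENNReal.ofReal (1 / (s + 1)) * ENNReal.ofReal ((1 + m) ^ (-(s + 1))) := by
    intro m (hm : 0 < m)
    have := h.tailMass_nonneg hm.le
    have := h.nonneg m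
    have := h.cutoffIsoDeriv_nonneg hm
    rw [← ENNReal.ofReal_ofNat 2]
    iterate 5 rw [← ENNReal.ofReal_mul (by positivity)]
    iterate 3 rw [← ENNReal.ofReal_add (by positivity) (by positivity)]
    exact ENNReal.ofReal_le_ofReal (h.pointwise_inequality hs hm)
  have key := setLIntegral_mono' (μ := volume) measurableSet_Ioi hpointwise
  iterate 3 rw [lintegral_add_left (by fun_prop)] at key
  iterate 5 rw [lintegral_const_mul _ (by fun_prop)] at key
  have hmass : (s + 1 / (s + 1)) * (1 / s) = 1 + 1 / (s + 1) * (1 / s) := by field_simp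
  rw [lintegral_one_add_rpow hs0, h.mass, ← ENNReal.ofReal_mul (by positivity),
    ← ENNReal.ofReal_mul (by positivity), hmass, ENNReal.ofReal_add (by positivity) (by positivity),
    ← add_assoc, ENNReal.ofReal_one] at key
  exact (ENNReal.add_le_add_iff_right ENNReal.ofReal_ne_top).1 key

end NormalizedProfile

/-! ### Reduction of the inequality to the distribution function -/

/-- A bounded nonnegative function normalised to `∫ u ^ (2 + 2 / s) dμ = 1 / s`. -/
structure NormalizedFunction {α : Type*} [MeasurableSpace α] (μ : Measure α) (s : ℝ)
    (u : α → ℝ) : Prop where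
  exponent_pos : 0 < s
  measurable : Measurable u
  bddAbove : BddAbove (Set.range u)
  nonneg : ∀ x, 0 ≤ u x
  mass : ∫⁻ x, ENNReal.ofReal (u x ^ (2 + 2 / s)) ∂μ = ENNReal.ofReal (1 / s)

/-- The weight on the levels of `u` for which testing the isoperimetric inequality on superlevel
sets gives the sharp inequality. -/
noncomputable def optimalWeight {α : Type*} [MeasurableSpace α] (μ : Measure α) (s : ℝ)
    (u : α → ℝ) (t : ℝ) : ℝ :=
  s / 2 * t * massCutoff s (decreasingRearrangement μ u) (distributionFunction μ u t).toReal

lemma lintegral_Ioo_ofReal_two_mul {b : ℝ} (hb : 0 ≤ b) :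
    ∫⁻ t in Set.Ioo 0 b, ENNReal.ofReal (2 * t) = ENNReal.ofReal (b ^ 2) := by
  have hint : IntegrableOn (fun t : ℝ => 2 * t) (Set.Ioc 0 b) :=
    Continuous.integrableOn_Ioc (by fun_prop)
  rw [← ofReal_integral_eq_lintegral_ofReal (hint.mono_set Set.Ioo_subset_Ioc_self)
      ((ae_restrict_mem measurableSet_Ioo).mono fun x hx => mul_nonneg zero_le_two hx.1.le),
    ← integral_Ioc_eq_integral_Ioo, ← intervalIntegral.integral_of_le hb,
    intervalIntegral.integral_const_mul, integral_id]
  congr 1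
  ring

namespace NormalizedFunction

variable {α : Type*} [MeasurableSpace α] {μ : Measure α} {s : ℝ} {u : α → ℝ}

lemma power_pos (h : NormalizedFunction μ s u) : 0 < 2 + 2 / s := by
  have := h.exponent_pos
  positivity

lemma distributionFunction_ne_top (h : NormalizedFunction μ s u) {t : ℝ} (ht : 0 < t) :
    distributionFunction μ u t ≠ ⊤ :=
  distributionFunction_ne_top_of_lintegral_rpow h.power_pos h.measurable
    (h.mass ▸ ENNReal.ofReal_ne_top) ht

lemma lintegral_comp (h : NormalizedFunction μ s u) {φ : ℝ → ENNReal} (hφ : Measurable φ)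
    (hφ0 : φ 0 = 0) :
    ∫⁻ m in Set.Ioi 0, φ (decreasingRearrangement μ u m) = ∫⁻ x, φ (u x) ∂μ :=
  lintegral_comp_decreasingRearrangement h.measurable h.bddAbove h.nonneg
    (fun _ => h.distributionFunction_ne_top) hφ hφ0

lemma profile (h : NormalizedFunction μ s u) :
    NormalizedProfile s (decreasingRearrangement μ u) where
  exponent_pos := h.exponent_pos
  nonneg := decreasingRearrangement_nonneg
  antitone := antitone_decreasingRearrangement h.bddAbove
  rightContinuous := continuousWithinAt_decreasingRearrangement h.bddAbove
  mass := by
    rw [← h.mass]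
    exact h.lintegral_comp (φ := fun t => ENNReal.ofReal (t ^ (2 + 2 / s))) (by fun_prop)
      (by rw [Real.zero_rpow h.power_pos.ne', ENNReal.ofReal_zero])

lemma measurable_optimalWeight (h : NormalizedFunction μ s u) :
    Measurable (optimalWeight μ s u) := by
  have := h.profile.continuous_massCutoff.measurable
  have := (antitone_distributionFunction (μ := μ) (u := u)).measurable
  unfold optimalWeight
  fun_prop

lemma optimalWeight_nonneg (h : NormalizedFunction μ s u) {t : ℝ} (ht : 0 ≤ t) :
    0 ≤ optimalWeight μ s u t := by
  have := h.exponent_pos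
  exact mul_nonneg (by positivity) (Real.sqrt_nonneg _)

lemma sq_optimalWeight_le (h : NormalizedFunction μ s u) {m : ℝ} (hm : 0 ≤ m) :
    4 * optimalWeight μ s u (decreasingRearrangement μ u m) ^ 2 ≤
      s ^ 2 * ((1 - tailMass s (decreasingRearrangement μ u) m ^ (1 / s)) *
        decreasingRearrangement μ u m ^ 2) := by
  set U := decreasingRearrangement μ u
  have hs := h.exponent_pos
  have hM : (distributionFunction μ u (U m)).toReal ≤ m := by
    refine ENNReal.toReal_le_of_le_ofReal hm (not_lt.1 fun hlt => ?_)
    exact lt_irrefl _ ((lt_decreasingRearrangement_iff h.bddAbove (h.profile.nonneg m)).2 hlt)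
  set M := (distributionFunction μ u (U m)).toReal
  have hMnonneg : 0 ≤ M := ENNReal.toReal_nonneg
  have hpow : tailMass s U m ^ (1 / s) ≤ tailMass s U M ^ (1 / s) :=
    Real.rpow_le_rpow (h.profile.tailMass_nonneg hm) (h.profile.antitone_tailMass hM)
      (by positivity)
  have hone : tailMass s U M ^ (1 / s) ≤ 1 :=
    Real.rpow_le_one (h.profile.tailMass_nonneg hMnonneg) (h.profile.tailMass_le_one hMnonneg)
      (by positivity)
  calc 4 * optimalWeight μ s u (U m) ^ 2 = s ^ 2 * ((1 - tailMass s U M ^ (1 / s)) * U m ^ 2) := by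
        rw [optimalWeight, massCutoff, mul_pow, Real.sq_sqrt (by linarith)]
        ring
    _ ≤ s ^ 2 * ((1 - tailMass s U m ^ (1 / s)) * U m ^ 2) := by gcongr

lemma lintegral_sq_optimalWeight_add_le (h : NormalizedFunction μ s u) :
    4 * (∫⁻ x, ENNReal.ofReal (optimalWeight μ s u (u x) ^ 2) ∂μ) +
        ENNReal.ofReal (s ^ 2) * (∫⁻ m in Set.Ioi 0, ENNReal.ofReal
          (tailMass s (decreasingRearrangement μ u) m ^ (1 / s) *
            decreasingRearrangement μ u m ^ 2)) ≤
      ENNReal.ofReal (s ^ 2) * ∫⁻ x, ENNReal.ofReal (u x ^ 2) ∂μ := by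
  have hβ := h.measurable_optimalWeight
  have hU := h.profile.antitone.measurable
  have hI := h.profile.continuous_tailMass.measurable
  rw [← h.lintegral_comp (φ := fun t => ENNReal.ofReal (optimalWeight μ s u t ^ 2)) (by fun_prop)
      (by simp [optimalWeight]),
    ← h.lintegral_comp (φ := fun t => ENNReal.ofReal (t ^ 2)) (by fun_prop) (by simp),
    ← lintegral_const_mul _ (by fun_prop), ← lintegral_const_mul _ (by fun_prop),
    ← lintegral_const_mul _ (by fun_prop), ← lintegral_add_left (by fun_prop)]
  refine setLIntegral_mono' measurableSet_Ioi fun m hm => ?_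
  have hpos : 0 ≤ tailMass s (decreasingRearrangement μ u) m ^ (1 / s) :=
    Real.rpow_nonneg (h.profile.tailMass_nonneg (le_of_lt hm)) _
  rw [← ENNReal.ofReal_ofNat 4, ← ENNReal.ofReal_mul (by norm_num),
    ← ENNReal.ofReal_mul (by positivity), ← ENNReal.ofReal_mul (by positivity),
    ← ENNReal.ofReal_add (by positivity) (by positivity)]
  refine ENNReal.ofReal_le_ofReal ?_
  linarith [h.sq_optimalWeight_le (le_of_lt hm)]

lemma setLIntegral_cutoffIsoDeriv_le (h : NormalizedFunction μ s u) {t : ℝ} (ht : 0 < t) :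
    ∫⁻ m in {m | t < decreasingRearrangement μ u m},
        ENNReal.ofReal (cutoffIsoDeriv s (decreasingRearrangement μ u) m)
          ∂(volume.restrict (Set.Ioi 0)) ≤
      ENNReal.ofReal (isoProfile (distributionFunction μ u t).toReal *
        massCutoff s (decreasingRearrangement μ u) (distributionFunction μ u t).toReal) := by
  have hiff (m : ℝ) (hm : 0 < m) :
      t < decreasingRearrangement μ u m ↔ m < (distributionFunction μ u t).toReal :=
    (lt_decreasingRearrangement_iff h.bddAbove ht.le).trans
      (ENNReal.ofReal_lt_iff_lt_toReal hm.le (h.distributionFunction_ne_top ht))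
  have hset : {m | t < decreasingRearrangement μ u m} ∩ Set.Ioi 0 =
      Set.Ioo 0 (distributionFunction μ u t).toReal := by
    rw [Set.inter_comm]
    exact Set.ext fun m => and_congr_right fun hm => hiff m hm
  rw [Measure.restrict_restrict
    (measurableSet_lt measurable_const h.profile.antitone.measurable), hset]
  exact h.profile.lintegral_cutoffIsoDeriv_le ENNReal.toReal_nonneg
    fun m hm => ht.trans ((hiff m hm.1).2 hm.2)

lemma lintegral_cutoffIsoDeriv_mul_sq_le (h : NormalizedFunction μ s u) :
    ENNReal.ofReal (2 * s) * (∫⁻ m in Set.Ioi 0, ENNReal.ofReal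
        (cutoffIsoDeriv s (decreasingRearrangement μ u) m * decreasingRearrangement μ u m ^ 2)) ≤
      8 * ∫⁻ t in Set.Ioi (0 : ℝ), ENNReal.ofReal
        (optimalWeight μ s u t * isoProfile (distributionFunction μ u t).toReal) := by
  set U := decreasingRearrangement μ u
  set M := distributionFunction μ u
  have hs := h.exponent_pos
  have hU := h.profile.antitone.measurable
  have hn := h.profile.measurable_cutoffIsoDeriv
  have hβ := h.measurable_optimalWeight
  have hM := (antitone_distributionFunction (μ := μ) (u := u)).measurable
  have hiso := continuous_isoProfile.measurable
  have hlayer : ∫⁻ m in Set.Ioi 0, ENNReal.ofReal (cutoffIsoDeriv s U m * U m ^ 2) =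
      ∫⁻ t in Set.Ioi 0, ENNReal.ofReal (2 * t) * ∫⁻ m in {m | t < U m},
        ENNReal.ofReal (cutoffIsoDeriv s U m) ∂(volume.restrict (Set.Ioi 0)) := by
    have := lintegral_mul_distributionFunction
      (μ := (volume.restrict (Set.Ioi 0)).withDensity
        fun m => ENNReal.ofReal (cutoffIsoDeriv s U m))
      (A := fun t => ENNReal.ofReal (2 * t)) (by fun_prop) hU
    simp only [distributionFunction, withDensity_apply _ (measurableSet_lt measurable_const hU),
      lintegral_Ioo_ofReal_two_mul (h.profile.nonneg _)] at this
    rw [this, lintegral_withDensity_eq_lintegral_mul _ (by fun_prop) (by fun_prop)]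
    exact setLIntegral_congr_fun measurableSet_Ioi
      fun m hm => ENNReal.ofReal_mul (h.profile.cutoffIsoDeriv_nonneg hm)
  rw [hlayer, ← lintegral_const_mul' _ _ ENNReal.ofReal_ne_top,
    ← lintegral_const_mul _ (by fun_prop)]
  refine setLIntegral_mono' measurableSet_Ioi fun t (ht : 0 < t) => ?_
  calc ENNReal.ofReal (2 * s) * (ENNReal.ofReal (2 * t) * ∫⁻ m in {m | t < U m},
        ENNReal.ofReal (cutoffIsoDeriv s U m) ∂(volume.restrict (Set.Ioi 0)))
      ≤ ENNReal.ofReal (2 * s) * (ENNReal.ofReal (2 * t) *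
          ENNReal.ofReal (isoProfile (M t).toReal * massCutoff s U (M t).toReal)) := by
        gcongr
        exact h.setLIntegral_cutoffIsoDeriv_le ht
    _ = 8 * ENNReal.ofReal (optimalWeight μ s u t * isoProfile (M t).toReal) := by
        rw [← ENNReal.ofReal_ofNat 8, ← ENNReal.ofReal_mul (by positivity),
          ← ENNReal.ofReal_mul (by positivity), ← ENNReal.ofReal_mul (by norm_num), optimalWeight]
        congr 1
        ring

lemma inequality_of_isoperimetric (h : NormalizedFunction μ s u) (hs : 2 ≤ s) {E : ENNReal}
    (hE : 8 * (∫⁻ t in Set.Ioi (0 : ℝ), ENNReal.ofReal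
        (optimalWeight μ s u t * isoProfile (distributionFunction μ u t).toReal)) ≤
      E + 4 * ∫⁻ x, ENNReal.ofReal (optimalWeight μ s u (u x) ^ 2) ∂μ) :
    ENNReal.ofReal (2 * s) * (∫⁻ x, ENNReal.ofReal (u x ^ 2) ∂μ) + ENNReal.ofReal s ≤
      E + ENNReal.ofReal (s ^ 2) * ∫⁻ x, ENNReal.ofReal (u x ^ 2) ∂μ := by
  set P := ∫⁻ x, ENNReal.ofReal (u x ^ 2) ∂μ
  set X := ∫⁻ m in Set.Ioi 0, ENNReal.ofReal
    (cutoffIsoDeriv s (decreasingRearrangement μ u) m * decreasingRearrangement μ u m ^ 2)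
  set Z := ∫⁻ m in Set.Ioi 0, ENNReal.ofReal
    (tailMass s (decreasingRearrangement μ u) m ^ (1 / s) * decreasingRearrangement μ u m ^ 2)
  have hprofile : 2 * P + 1 ≤ 2 * X + ENNReal.ofReal s * Z := by
    have hP : P = ∫⁻ m in Set.Ioi 0, ENNReal.ofReal (decreasingRearrangement μ u m ^ 2) :=
      (h.lintegral_comp (φ := fun t => ENNReal.ofReal (t ^ 2)) (by fun_prop) (by simp)).symm
    rw [hP]
    exact h.profile.lintegral_inequality hs
  calc ENNReal.ofReal (2 * s) * P + ENNReal.ofReal s = ENNReal.ofReal s * (2 * P + 1) := by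
        rw [ENNReal.ofReal_mul zero_le_two, ENNReal.ofReal_ofNat]
        ring
    _ ≤ ENNReal.ofReal s * (2 * X + ENNReal.ofReal s * Z) := by gcongr
    _ = ENNReal.ofReal (2 * s) * X + ENNReal.ofReal (s ^ 2) * Z := by
        rw [ENNReal.ofReal_mul zero_le_two, ENNReal.ofReal_ofNat,
          ENNReal.ofReal_pow h.exponent_pos.le]
        ring
    _ ≤ (E + 4 * ∫⁻ x, ENNReal.ofReal (optimalWeight μ s u (u x) ^ 2) ∂μ) +
          ENNReal.ofReal (s ^ 2) * Z := by
        gcongr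
        exact h.lintegral_cutoffIsoDeriv_mul_sq_le.trans hE
    _ ≤ E + ENNReal.ofReal (s ^ 2) * P := by
        rw [add_assoc]
        gcongr
        exact h.lintegral_sq_optimalWeight_add_le

end NormalizedFunction

/-! ### Last crossings along a ray -/

section LastCrossing

variable {v : ℝ → ℝ} {b t : ℝ}

/-- The last time in `[0, b]` at which `v` is at least `t`. -/
noncomputable def lastCrossing (v : ℝ → ℝ) (b t : ℝ) : ℝ :=
  sSup {r | r ∈ Set.Icc 0 b ∧ t ≤ v r}

lemma bddAbove_setOf_le (v : ℝ → ℝ) (b t : ℝ) : BddAbove {r | r ∈ Set.Icc 0 b ∧ t ≤ v r} :=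
  ⟨b, fun _ hr => hr.1.2⟩

lemma lastCrossing_nonneg : 0 ≤ lastCrossing v b t := Real.sSup_nonneg fun _ hr => hr.1.1

lemma antitone_lastCrossing : Antitone (lastCrossing v b) := by
  intro s t hst
  rcases Set.eq_empty_or_nonempty {r | r ∈ Set.Icc 0 b ∧ t ≤ v r} with hempty | hne
  · rw [lastCrossing, hempty, Real.sSup_empty]
    exact lastCrossing_nonneg
  · exact csSup_le_csSup (bddAbove_setOf_le v b s) hne fun r hr => ⟨hr.1, hst.trans hr.2⟩

lemma lt_of_lastCrossing_lt {r : ℝ} (hr : lastCrossing v b t < r) (hrb : r ≤ b) : v r < t :=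
  not_le.1 fun hle => hr.not_ge <|
    le_csSup (bddAbove_setOf_le v b t) ⟨⟨lastCrossing_nonneg.trans hr.le, hrb⟩, hle⟩

lemma lastCrossing_mem_Ioo_and_apply (hb : 0 ≤ b) (hv : ContinuousOn v (Set.Icc 0 b))
    (ht : t ∈ Set.Ioo (v b) (v 0)) :
    lastCrossing v b t ∈ Set.Ioo 0 b ∧ v (lastCrossing v b t) = t := by
  have hclosed : IsClosed {r | r ∈ Set.Icc 0 b ∧ t ≤ v r} :=
    hv.preimage_isClosed_of_isClosed isClosed_Icc isClosed_Ici
  obtain ⟨⟨h0, hb'⟩, hle⟩ := hclosed.csSup_mem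
    ⟨0, Set.left_mem_Icc.2 hb, ht.2.le⟩ (bddAbove_setOf_le v b t)
  change 0 ≤ lastCrossing v b t at h0
  change lastCrossing v b t ≤ b at hb'
  change t ≤ v (lastCrossing v b t) at hle
  have heq : v (lastCrossing v b t) = t := by
    refine le_antisymm (not_lt.1 fun hlt => ?_) hle
    obtain ⟨r, hr, hrt⟩ := intermediate_value_Icc' hb' (hv.mono (Set.Icc_subset_Icc_left h0))
      ⟨ht.1.le, hlt.le⟩
    rcases hr.1.eq_or_lt with rfl | h
    · exact hlt.ne' hrt
    · exact (lt_of_lastCrossing_lt h hr.2).ne hrt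
  refine ⟨⟨h0.lt_of_ne fun h => ?_, hb'.lt_of_ne fun h => ?_⟩, heq⟩
  · exact ht.2.ne' (by rw [h, heq])
  · exact ht.1.ne (by rw [← heq, h])

lemma hasDerivAt_lastCrossing_nonpos {d : ℝ} (hb : lastCrossing v b t < b)
    (ht : v (lastCrossing v b t) = t) (hd : HasDerivAt v d (lastCrossing v b t)) : d ≤ 0 := by
  have hslope := hasDerivWithinAt_iff_tendsto_slope' Set.self_notMem_Ioi |>.1
    (hd.hasDerivWithinAt (s := Set.Ioi (lastCrossing v b t)))
  refine le_of_tendsto hslope ?_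
  filter_upwards [Ioo_mem_nhdsGT hb] with r hr
  rw [slope_def_field, ht]
  exact div_nonpos_of_nonpos_of_nonneg (sub_nonpos.2 (lt_of_lastCrossing_lt hr.1 hr.2.le).le)
    (sub_nonneg.2 hr.1.le)

/-- The substitution `t = v r` along the last crossing times, at which `v` decreases. -/
lemma lintegral_superlevel_le_lintegral_neg_deriv {v' : ℝ → ℝ} (hb : 0 ≤ b)
    (hv : ContinuousOn v (Set.Icc 0 b)) (hv' : ∀ r ∈ Set.Ioo 0 b, HasDerivAt v (v' r) r)
    (a ρ : ℝ → ENNReal) (c : ENNReal) :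
    ∫⁻ t in Set.Ioo (v b) (v 0),
        a t * (c + ∫⁻ r in Set.Ioo 0 b, {r | t < v r}.indicator ρ r) ≤
      ∫⁻ r in Set.Ioo 0 b, ENNReal.ofReal (-v' r) *
        ((Set.Iio (v 0)).indicator a (v r) * (c + ∫⁻ x in Set.Ioo 0 r, ρ x)) := by
  set S := lastCrossing v b '' Set.Ioo (v b) (v 0)
  have hcross : ∀ t ∈ Set.Ioo (v b) (v 0), lastCrossing v b t ∈ Set.Ioo 0 b ∧
      v (lastCrossing v b t) = t := fun t => lastCrossing_mem_Ioo_and_apply hb hv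
  have hinv : Set.LeftInvOn v (lastCrossing v b) (Set.Ioo (v b) (v 0)) :=
    fun t ht => (hcross t ht).2
  have hS : MeasurableSet S :=
    measurableSet_Ioo.image_of_measurable_injOn antitone_lastCrossing.measurable hinv.injOn
  have hSb : S ⊆ Set.Ioo 0 b := Set.image_subset_iff.2 fun t ht => (hcross t ht).1
  have hvS : v '' S = Set.Ioo (v b) (v 0) := hinv.image_image
  have hinj : Set.InjOn v S := (hinv.rightInvOn_image).injOn
  rw [← hvS, lintegral_image_eq_lintegral_abs_deriv_mul hS
    (fun r hr => (hv' r (hSb hr)).hasDerivWithinAt) hinj]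
  refine le_trans (setLIntegral_mono' hS ?_) (lintegral_mono_set hSb)
  rintro _ ⟨t, ht, rfl⟩
  obtain ⟨hmem, heq⟩ := hcross t ht
  rw [abs_of_nonpos (hasDerivAt_lastCrossing_nonpos hmem.2 heq (hv' _ hmem)), heq,
    Set.indicator_of_mem (Set.mem_Iio.2 ht.2)]
  gcongr _ * (_ * (_ + ?_))
  rw [← lintegral_indicator measurableSet_Ioo, ← lintegral_indicator measurableSet_Ioo]
  refine lintegral_mono fun r => ?_
  by_cases hr : r ∈ Set.Ioo 0 b ∧ t < v r
  · have hle : r ≤ lastCrossing v b t :=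
      le_csSup (bddAbove_setOf_le v b t) ⟨⟨hr.1.1.le, hr.1.2.le⟩, hr.2.le⟩
    have hlt : r < lastCrossing v b t := hle.lt_of_ne fun h => hr.2.ne' (h ▸ heq)
    rw [Set.indicator_of_mem (show r ∈ Set.Ioo 0 (lastCrossing v b t) from ⟨hr.1.1, hlt⟩)]
    exact (Set.indicator_le_self _ _ r).trans (Set.indicator_le_self _ _ r)
  · rw [Set.indicator_indicator,
      Set.indicator_of_notMem (s := Set.Ioo 0 b ∩ {r | t < v r}) hr]
    exact zero_le

end LastCrossing

/-! ### The hyperbolic measure and the involutive automorphisms of the disc -/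

/-- The hyperbolic measure `(1/π)(1−|ζ|²)^{−2} dA` on the disc, which is `ν_k` for `k = 1`. -/
noncomputable def hyperbolicMeasure : Measure ℂ := nuMeasure 1

/-- The density `2r(1−r²)^{−2}` of the hyperbolic measure in polar coordinates, normalized so
that the angle has total mass one. -/
noncomputable def radialDensity (r : ℝ) : ENNReal := ENNReal.ofReal (2 * r / (1 - r ^ 2) ^ 2)

lemma radialDensity_ne_top (r : ℝ) : radialDensity r ≠ ⊤ := ENNReal.ofReal_ne_top

lemma measurable_radialDensity : Measurable radialDensity := by
  unfold radialDensity
  fun_prop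

lemma lintegral_nuMeasure_eq_setLIntegral (k : ℝ) (g : ℂ → ENNReal) :
    ∫⁻ ζ, g ζ ∂nuMeasure k = ∫⁻ ζ in ball (0 : ℂ) 1,
      ENNReal.ofReal ((2 * k - 1) / Real.pi * ((1 - ‖ζ‖ ^ 2) ^ 2)⁻¹) * g ζ := by
  rw [nuMeasure, lintegral_withDensity_eq_lintegral_mul_non_measurable _ (by fun_prop)
    (.of_forall fun _ => ENNReal.ofReal_lt_top)]
  rfl

lemma lintegral_hyperbolicMeasure (g : ℂ → ENNReal) :
    ∫⁻ ζ, g ζ ∂hyperbolicMeasure = ∫⁻ ζ in ball (0 : ℂ) 1,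
      ENNReal.ofReal (1 / Real.pi * ((1 - ‖ζ‖ ^ 2) ^ 2)⁻¹) * g ζ := by
  rw [hyperbolicMeasure, lintegral_nuMeasure_eq_setLIntegral]
  norm_num

lemma lintegral_nuMeasure (k : ℝ) (g : ℂ → ENNReal) :
    ∫⁻ ζ, g ζ ∂nuMeasure k = ENNReal.ofReal (2 * k - 1) * ∫⁻ ζ, g ζ ∂hyperbolicMeasure := by
  rw [lintegral_nuMeasure_eq_setLIntegral, lintegral_hyperbolicMeasure,
    ← lintegral_const_mul' _ _ ENNReal.ofReal_ne_top]
  refine lintegral_congr fun ζ => ?_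
  rw [← mul_assoc, ← ENNReal.ofReal_mul' (by positivity)]
  congr 2
  ring

instance sFinite_hyperbolicMeasure : SFinite hyperbolicMeasure := by
  unfold hyperbolicMeasure nuMeasure
  infer_instance

lemma ae_hyperbolicMeasure_norm_lt_one : ∀ᵐ ζ ∂hyperbolicMeasure, ‖ζ‖ < 1 := by
  refine (withDensity_absolutelyContinuous _ _).ae_le ?_
  filter_upwards [ae_restrict_mem measurableSet_ball] with ζ hζ
  exact mem_ball_zero_iff.1 hζ

lemma lintegral_radialDensity {r : ℝ} (hr0 : 0 ≤ r) (hr1 : r < 1) :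
    ∫⁻ x in Set.Ioo 0 r, radialDensity x = ENNReal.ofReal (r ^ 2 / (1 - r ^ 2)) := by
  have hpos : ∀ x ∈ Set.uIcc 0 r, 0 < 1 - x ^ 2 := by
    intro x hx
    rw [Set.uIcc_of_le hr0] at hx
    nlinarith [hx.1, hx.2]
  have hderiv : ∀ x ∈ Set.uIcc 0 r,
      HasDerivAt (fun x : ℝ => (1 - x ^ 2)⁻¹) (2 * x / (1 - x ^ 2) ^ 2) x := by
    intro x hx
    refine (((hasDerivAt_id x).pow 2).const_sub 1).fun_inv (hpos x hx).ne' |>.congr_deriv ?_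
    simp
  have hint : IntervalIntegrable (fun x : ℝ => 2 * x / (1 - x ^ 2) ^ 2) volume 0 r :=
    ContinuousOn.intervalIntegrable <| ContinuousOn.div (by fun_prop) (by fun_prop)
      fun x hx => (pow_pos (hpos x hx) 2).ne'
  have hFTC := intervalIntegral.integral_eq_sub_of_hasDerivAt hderiv hint
  rw [intervalIntegral.integral_of_le hr0, integral_Ioc_eq_integral_Ioo] at hFTC
  unfold radialDensity
  rw [← ofReal_integral_eq_lintegral_ofReal
    (((intervalIntegrable_iff_integrableOn_Ioc_of_le hr0).1 hint).mono_set Set.Ioo_subset_Ioc_self),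
    hFTC]
  · have := (hpos r Set.right_mem_uIcc).ne'
    congr 1
    field_simp
    ring
  · filter_upwards [ae_restrict_mem measurableSet_Ioo] with x hx
    have : 0 ≤ x := hx.1.le
    change 0 ≤ 2 * x / (1 - x ^ 2) ^ 2
    positivity

lemma one_add_lintegral_radialDensity {r : ℝ} (hr0 : 0 ≤ r) (hr1 : r < 1) :
    1 + ∫⁻ x in Set.Ioo 0 r, radialDensity x = ENNReal.ofReal (1 / (1 - r ^ 2)) := by
  have h : 0 < 1 - r ^ 2 := by nlinarith
  rw [lintegral_radialDensity hr0 hr1, ← ENNReal.ofReal_one,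
    ← ENNReal.ofReal_add zero_le_one (by positivity)]
  congr 1
  field_simp
  ring

lemma measurable_circleMap_zero : Measurable fun p : ℝ × ℝ => circleMap 0 p.1 p.2 := by
  unfold circleMap
  fun_prop

lemma polarCoord_symm_eq_circleMap (p : ℝ × ℝ) :
    Complex.polarCoord.symm p = circleMap 0 p.1 p.2 := by
  rw [Complex.polarCoord_symm_apply, circleMap, Complex.exp_mul_I, zero_add, Complex.ofReal_cos,
    Complex.ofReal_sin]

lemma lintegral_ball_eq_lintegral_circleMap (R : ℝ) {F : ℂ → ENNReal} (hF : Measurable F) :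
    ∫⁻ w in ball (0 : ℂ) R, F w = ∫⁻ θ in Set.Ioo (-Real.pi) Real.pi,
      ∫⁻ r in Set.Ioo 0 R, ENNReal.ofReal r * F (circleMap 0 r θ) := by
  have hmeas : Measurable fun p : ℝ × ℝ =>
      ENNReal.ofReal p.1 • (ball (0 : ℂ) R).indicator F (circleMap 0 p.1 p.2) :=
    Measurable.mul (by fun_prop)
      ((hF.indicator measurableSet_ball).comp measurable_circleMap_zero)
  rw [← lintegral_indicator measurableSet_ball, ← Complex.lintegral_comp_polarCoord_symm,
    polarCoord_target, Measure.volume_eq_prod, ← Measure.prod_restrict]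
  simp_rw [polarCoord_symm_eq_circleMap]
  rw [lintegral_prod_symm' _ hmeas]
  refine lintegral_congr fun θ => ?_
  rw [← lintegral_indicator measurableSet_Ioi, ← lintegral_indicator measurableSet_Ioo]
  refine lintegral_congr fun r => ?_
  by_cases h0 : 0 < r
  · by_cases hR : r < R <;> simp [Set.indicator, h0, hR, abs_of_pos h0]
  · simp [Set.indicator, h0]

lemma lintegral_hyperbolicMeasure_eq_lintegral_circleMap {F : ℂ → ENNReal} (hF : Measurable F) :
    ENNReal.ofReal (2 * Real.pi) * ∫⁻ ζ, F ζ ∂hyperbolicMeasure =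
      ∫⁻ θ in Set.Ioo (-Real.pi) Real.pi,
        ∫⁻ r in Set.Ioo 0 1, radialDensity r * F (circleMap 0 r θ) := by
  rw [lintegral_hyperbolicMeasure, lintegral_ball_eq_lintegral_circleMap 1 (by fun_prop),
    ← lintegral_const_mul' _ _ ENNReal.ofReal_ne_top]
  refine lintegral_congr fun θ => ?_
  rw [← lintegral_const_mul' _ _ ENNReal.ofReal_ne_top]
  refine lintegral_congr fun r => ?_
  rw [norm_circleMap_zero, sq_abs, ← mul_assoc, ← mul_assoc, mul_assoc (ENNReal.ofReal _),
    ← ENNReal.ofReal_mul' (by positivity), ← ENNReal.ofReal_mul (by positivity), radialDensity]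
  congr 2
  field_simp

/-- The involutive automorphism `w ↦ (z − w) / (1 − z̄ w)` of the unit disc, which exchanges
`0` and `z`. -/
noncomputable def diskInvolution (z w : ℂ) : ℂ := (z - w) / (1 - (starRingEnd ℂ) z * w)

section DiskInvolution

variable {z w : ℂ}

lemma one_sub_conj_mul_ne_zero (hz : ‖z‖ < 1) (hw : ‖w‖ ≤ 1) : 1 - (starRingEnd ℂ) z * w ≠ 0 := by
  refine sub_ne_zero.2 fun h => ?_
  have hnorm : ‖z‖ * ‖w‖ = 1 := by simpa using (congrArg norm h).symm
  nlinarith [norm_nonneg z, norm_nonneg w]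

lemma one_sub_sq_norm_pos (hz : ‖z‖ < 1) : 0 < 1 - ‖z‖ ^ 2 := by nlinarith [norm_nonneg z]

lemma one_sub_sq_norm_ne_zero (hz : ‖z‖ < 1) : 1 - (‖z‖ : ℂ) ^ 2 ≠ 0 := by
  exact_mod_cast (one_sub_sq_norm_pos hz).ne'

lemma diskInvolution_zero (z : ℂ) : diskInvolution z 0 = z := by simp [diskInvolution]

lemma one_sub_sq_norm_diskInvolution (hz : ‖z‖ < 1) (hw : ‖w‖ ≤ 1) :
    1 - ‖diskInvolution z w‖ ^ 2 =
      (1 - ‖z‖ ^ 2) * (1 - ‖w‖ ^ 2) / ‖1 - (starRingEnd ℂ) z * w‖ ^ 2 := by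
  have h : ‖1 - (starRingEnd ℂ) z * w‖ ≠ 0 := norm_ne_zero_iff.2 (one_sub_conj_mul_ne_zero hz hw)
  have hpolar : ‖1 - (starRingEnd ℂ) z * w‖ ^ 2 - ‖z - w‖ ^ 2 =
      (1 - ‖z‖ ^ 2) * (1 - ‖w‖ ^ 2) := by
    apply Complex.ofReal_injective
    push_cast
    simp only [← Complex.mul_conj', map_sub, map_mul, map_one, Complex.conj_conj]
    ring
  rw [diskInvolution, norm_div, div_pow, one_sub_div (by positivity), hpolar]

lemma norm_diskInvolution_lt_one (hz : ‖z‖ < 1) (hw : ‖w‖ < 1) : ‖diskInvolution z w‖ < 1 := by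
  have h : 0 < ‖1 - (starRingEnd ℂ) z * w‖ :=
    norm_pos_iff.2 (one_sub_conj_mul_ne_zero hz hw.le)
  have hpos : 0 < 1 - ‖diskInvolution z w‖ ^ 2 := by
    rw [one_sub_sq_norm_diskInvolution hz hw.le]
    exact div_pos (mul_pos (one_sub_sq_norm_pos hz) (one_sub_sq_norm_pos hw)) (by positivity)
  exact (sq_lt_one_iff₀ (norm_nonneg _)).1 (sub_pos.1 hpos)

lemma norm_diskInvolution_eq_one (hz : ‖z‖ < 1) (hw : ‖w‖ = 1) : ‖diskInvolution z w‖ = 1 := by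
  have h := one_sub_sq_norm_diskInvolution hz hw.le
  rw [hw, one_pow, sub_self, mul_zero, zero_div, sub_eq_zero] at h
  exact (pow_eq_one_iff_of_nonneg (norm_nonneg _) two_ne_zero).1 h.symm

lemma diskInvolution_diskInvolution (hz : ‖z‖ < 1) (hw : ‖w‖ ≤ 1) :
    diskInvolution z (diskInvolution z w) = w := by
  have hz' := one_sub_sq_norm_ne_zero hz
  have hd := one_sub_conj_mul_ne_zero hz hw
  generalize hden : 1 - (starRingEnd ℂ) z * w = d at hd
  have hnum' : z - diskInvolution z w = w * (1 - (‖z‖ : ℂ) ^ 2) / d := by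
    rw [diskInvolution, hden, ← Complex.mul_conj', eq_div_iff hd, sub_mul, div_mul_cancel₀ _ hd,
      ← hden]
    ring
  have hden' : 1 - (starRingEnd ℂ) z * diskInvolution z w = (1 - (‖z‖ : ℂ) ^ 2) / d := by
    rw [diskInvolution, hden, ← Complex.mul_conj', eq_div_iff hd, sub_mul, mul_assoc,
      div_mul_cancel₀ _ hd, ← hden]
    ring
  rw [diskInvolution, hnum', hden']
  field_simp

lemma hasDerivAt_diskInvolution (hz : ‖z‖ < 1) (hw : ‖w‖ ≤ 1) :
    HasDerivAt (diskInvolution z) (-(1 - (‖z‖ : ℂ) ^ 2) / (1 - (starRingEnd ℂ) z * w) ^ 2) w := by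
  have hnum : HasDerivAt (fun w => z - w) (-1) w := (hasDerivAt_id w).const_sub z
  have hden : HasDerivAt (fun w => 1 - (starRingEnd ℂ) z * w) (-(starRingEnd ℂ) z) w := by
    simpa using ((hasDerivAt_id w).const_mul ((starRingEnd ℂ) z)).const_sub 1
  refine (hnum.div hden (one_sub_conj_mul_ne_zero hz hw)).congr_deriv ?_
  rw [← Complex.mul_conj']
  ring

lemma measurable_diskInvolution : Measurable fun p : ℂ × ℂ => diskInvolution p.1 p.2 := by
  unfold diskInvolution
  have : Measurable fun p : ℂ × ℂ => (starRingEnd ℂ) p.1 :=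
    Complex.continuous_conj.measurable.comp measurable_fst
  fun_prop

lemma injOn_diskInvolution (hz : ‖z‖ < 1) : Set.InjOn (diskInvolution z) (ball 0 1) :=
  Set.LeftInvOn.injOn (f₁' := diskInvolution z) fun _ hw =>
    diskInvolution_diskInvolution hz (mem_ball_zero_iff.1 hw).le

lemma image_diskInvolution_ball (hz : ‖z‖ < 1) : diskInvolution z '' ball 0 1 = ball 0 1 := by
  have hmaps : Set.MapsTo (diskInvolution z) (ball 0 1) (ball 0 1) := fun w hw =>
    mem_ball_zero_iff.2 (norm_diskInvolution_lt_one hz (mem_ball_zero_iff.1 hw))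
  exact hmaps.image_subset.antisymm fun w hw => ⟨diskInvolution z w, hmaps hw,
    diskInvolution_diskInvolution hz (mem_ball_zero_iff.1 hw).le⟩

lemma det_restrictScalars_toSpanSingleton (c : ℂ) :
    ((ContinuousLinearMap.toSpanSingleton ℂ c).restrictScalars ℝ).det = ‖c‖ ^ 2 := by
  change LinearMap.det
    ((ContinuousLinearMap.toSpanSingleton ℂ c : ℂ →L[ℂ] ℂ).toLinearMap.restrictScalars ℝ) = _
  rw [← LinearMap.det_toMatrix Complex.basisOneI, Matrix.det_fin_two]
  simp [LinearMap.toMatrix_apply, Complex.sq_norm, Complex.normSq_apply]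

lemma lintegral_comp_diskInvolution (hz : ‖z‖ < 1) (g : ℂ → ENNReal) :
    ∫⁻ w, g (diskInvolution z w) ∂hyperbolicMeasure = ∫⁻ w, g w ∂hyperbolicMeasure := by
  have hchange := lintegral_image_eq_lintegral_abs_det_fderiv_mul volume measurableSet_ball
    (fun w hw => ((hasDerivAt_diskInvolution hz
      (mem_ball_zero_iff.1 hw).le).hasFDerivAt.restrictScalars ℝ).hasFDerivWithinAt)
    (injOn_diskInvolution hz)
    (fun ζ => ENNReal.ofReal (1 / Real.pi * ((1 - ‖ζ‖ ^ 2) ^ 2)⁻¹) * g ζ)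
  rw [image_diskInvolution_ball hz] at hchange
  rw [lintegral_hyperbolicMeasure, lintegral_hyperbolicMeasure, hchange]
  refine setLIntegral_congr_fun measurableSet_ball fun w hw => ?_
  rw [mem_ball_zero_iff] at hw
  have hden := norm_pos_iff.2 (one_sub_conj_mul_ne_zero hz hw.le)
  have hz0 := one_sub_sq_norm_pos hz
  have hw0 := one_sub_sq_norm_pos hw
  have hnorm : ‖1 - (‖z‖ : ℂ) ^ 2‖ = 1 - ‖z‖ ^ 2 := by
    rw [← Complex.ofReal_one, ← Complex.ofReal_pow, ← Complex.ofReal_sub, Complex.norm_real,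
      Real.norm_of_nonneg hz0.le]
  rw [← mul_assoc, det_restrictScalars_toSpanSingleton, one_sub_sq_norm_diskInvolution hz hw.le,
    ← ENNReal.ofReal_mul (abs_nonneg _), abs_of_nonneg (by positivity), norm_div, norm_neg, hnorm,
    norm_pow]
  congr 2
  field_simp

end DiskInvolution

/-! ### A bathtub inequality for the Möbius kernel -/

lemma setLIntegral_ofReal_circleMap {f : ℂ → ℝ} {c : ℂ} {R : ℝ} (hf : CircleIntegrable f c R)
    (hnonneg : ∀ z ∈ sphere c |R|, 0 ≤ f z) :
    ∫⁻ θ in Set.Ioo (-Real.pi) Real.pi, ENNReal.ofReal (f (circleMap c R θ)) =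
      ENNReal.ofReal (2 * Real.pi * Real.circleAverage f c R) := by
  have hle : -Real.pi ≤ Real.pi := by linarith [Real.pi_pos]
  have hper : Function.Periodic (fun θ => f (circleMap c R θ)) (2 * Real.pi) :=
    fun θ => by simp only [periodic_circleMap c R θ]
  have hint : IntegrableOn (fun θ => f (circleMap c R θ)) (Set.Ioo (-Real.pi) Real.pi) :=
    ((intervalIntegrable_iff_integrableOn_Ioc_of_le hle).1
      (hper.intervalIntegrable₀ Real.two_pi_pos.ne' hf _ _)).mono_set Set.Ioo_subset_Ioc_self
  rw [← ofReal_integral_eq_lintegral_ofReal hint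
    (.of_forall fun θ => hnonneg _ (circleMap_mem_sphere' c R θ)),
    ← integral_Ioc_eq_integral_Ioo, ← intervalIntegral.integral_of_le hle,
    Real.circleAverage_eq_integral_add (-Real.pi),
    intervalIntegral.integral_comp_add_right (fun θ => f (circleMap c R θ)), smul_eq_mul,
    mul_inv_cancel_left₀ Real.two_pi_pos.ne']
  ring_nf

section Bathtub

variable {z v : ℂ}

lemma re_div_diskInvolution_sub (hv : v ≠ z) :
    (z / diskInvolution z v).re - (1 + ‖z‖ ^ 2) / 2 =
      (1 - ‖z‖ ^ 2) * (‖z‖ ^ 2 - ‖v‖ ^ 2) / (2 * ‖z - v‖ ^ 2) := by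
  have hpos : 0 < Complex.normSq (z - v) := Complex.normSq_pos.2 (sub_ne_zero.2 hv.symm)
  rw [diskInvolution, div_div_eq_mul_div, Complex.div_re]
  simp only [Complex.sq_norm] at hpos ⊢
  field_simp
  simp only [Complex.normSq_apply, Complex.sub_re, Complex.sub_im, Complex.mul_re,
    Complex.mul_im, Complex.conj_re, Complex.conj_im, Complex.one_re, Complex.one_im]
  ring

lemma re_div_diskInvolution_sub_nonneg (hz : ‖z‖ < 1) (hv : ‖v‖ < ‖z‖) :
    0 ≤ (z / diskInvolution z v).re - (1 + ‖z‖ ^ 2) / 2 := by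
  rw [re_div_diskInvolution_sub (ne_of_apply_ne norm hv.ne)]
  have hsq : ‖v‖ ^ 2 ≤ ‖z‖ ^ 2 := by gcongr
  exact div_nonneg (mul_nonneg (one_sub_sq_norm_pos hz).le (sub_nonneg.2 hsq)) (by positivity)

lemma re_div_diskInvolution_sub_nonpos (hz : ‖z‖ < 1) (hv : ‖z‖ ≤ ‖v‖) :
    (z / diskInvolution z v).re - (1 + ‖z‖ ^ 2) / 2 ≤ 0 := by
  rcases eq_or_ne v z with rfl | hne
  · have : 0 ≤ (1 + ‖v‖ ^ 2) / 2 := by positivity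
    simpa [diskInvolution] using this
  rw [re_div_diskInvolution_sub hne]
  have hsq : ‖z‖ ^ 2 ≤ ‖v‖ ^ 2 := by gcongr
  exact div_nonpos_of_nonpos_of_nonneg
    (mul_nonpos_of_nonneg_of_nonpos (one_sub_sq_norm_pos hz).le (sub_nonpos.2 hsq)) (by positivity)

lemma lintegral_circle_re_div_diskInvolution_sub (hz : ‖z‖ < 1) {r : ℝ} (hr : |r| < ‖z‖) :
    ∫⁻ θ in Set.Ioo (-Real.pi) Real.pi,
        ENNReal.ofReal ((z / diskInvolution z (circleMap 0 r θ)).re - (1 + ‖z‖ ^ 2) / 2) =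
      ENNReal.ofReal (Real.pi * (1 - ‖z‖ ^ 2)) := by
  have hball : ∀ v ∈ closedBall (0 : ℂ) |r|, ‖v‖ < ‖z‖ := fun v hv =>
    (mem_closedBall_zero_iff.1 hv).trans_lt hr
  have hharm : InnerProductSpace.HarmonicOnNhd
      (fun v => (z / diskInvolution z v).re - (1 + ‖z‖ ^ 2) / 2) (closedBall 0 |r|) := by
    intro v hv
    have han : AnalyticAt ℂ (fun v => z * (1 - (starRingEnd ℂ) z * v) / (z - v) -
        ((1 + ‖z‖ ^ 2) / 2 : ℝ)) v := by
      have : z - v ≠ 0 := sub_ne_zero.2 (ne_of_apply_ne norm (hball v hv).ne')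
      fun_prop (disch := assumption)
    simpa only [Complex.sub_re, Complex.ofReal_re, diskInvolution, div_div_eq_mul_div]
      using han.harmonicAt_re
  have hz0 : z ≠ 0 := norm_pos_iff.1 ((abs_nonneg r).trans_lt hr)
  rw [setLIntegral_ofReal_circleMap
    (f := fun v => (z / diskInvolution z v).re - (1 + ‖z‖ ^ 2) / 2), hharm.circleAverage_eq]
  · rw [diskInvolution_zero, div_self hz0, Complex.one_re]
    ring_nf
  · exact ContinuousOn.circleIntegrable' fun v hv =>
      (hharm v (sphere_subset_closedBall hv)).1.continuousAt.continuousWithinAt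
  · exact fun v hv => re_div_diskInvolution_sub_nonneg hz (hball v (sphere_subset_closedBall hv))

lemma lintegral_circle_re_div_diskInvolution_sub_eq_indicator (hz : ‖z‖ < 1) {r : ℝ}
    (hr : 0 < r) :
    ∫⁻ θ in Set.Ioo (-Real.pi) Real.pi,
        ENNReal.ofReal ((z / diskInvolution z (circleMap 0 r θ)).re - (1 + ‖z‖ ^ 2) / 2) =
      (Set.Ioo 0 ‖z‖).indicator (fun _ => ENNReal.ofReal (Real.pi * (1 - ‖z‖ ^ 2))) r := by
  rcases lt_or_ge r ‖z‖ with hrz | hrz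
  · rw [lintegral_circle_re_div_diskInvolution_sub hz (by rwa [abs_of_pos hr]),
      Set.indicator_of_mem (Set.mem_Ioo.2 ⟨hr, hrz⟩)]
  · have hneg : ∀ θ, (z / diskInvolution z (circleMap 0 r θ)).re - (1 + ‖z‖ ^ 2) / 2 ≤ 0 :=
      fun θ => re_div_diskInvolution_sub_nonpos hz <| by
        rwa [norm_circleMap_zero, abs_of_pos hr]
    simp_rw [ENNReal.ofReal_of_nonpos (hneg _), lintegral_zero]
    rw [Set.indicator_of_notMem fun h => hrz.not_gt h.2]

lemma lintegral_re_div_sub (hz : ‖z‖ < 1) :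
    ∫⁻ w, ENNReal.ofReal ((z / w).re - (1 + ‖z‖ ^ 2) / 2) ∂hyperbolicMeasure =
      ENNReal.ofReal (‖z‖ ^ 2 / 2) := by
  have hτ : Measurable (diskInvolution z) :=
    measurable_diskInvolution.comp (measurable_const.prodMk measurable_id)
  have := Complex.measurable_re
  have hz' := one_sub_sq_norm_pos hz
  have hpi : ENNReal.ofReal (2 * Real.pi) ≠ 0 := by simpa using Real.pi_pos
  refine (ENNReal.mul_right_inj hpi ENNReal.ofReal_ne_top).1 ?_
  rw [← lintegral_comp_diskInvolution hz,
    lintegral_hyperbolicMeasure_eq_lintegral_circleMap (by fun_prop), lintegral_lintegral_swap]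
  · have hangle : ∀ r ∈ Set.Ioo (0 : ℝ) 1, ∫⁻ θ in Set.Ioo (-Real.pi) Real.pi, radialDensity r *
        ENNReal.ofReal ((z / diskInvolution z (circleMap 0 r θ)).re - (1 + ‖z‖ ^ 2) / 2) =
        (Set.Ioo 0 ‖z‖).indicator
          (fun r => radialDensity r * ENNReal.ofReal (Real.pi * (1 - ‖z‖ ^ 2))) r := by
      intro r hr
      rw [lintegral_const_mul' _ _ (radialDensity_ne_top r),
        lintegral_circle_re_div_diskInvolution_sub_eq_indicator hz hr.1, Set.indicator_mul_right]
    rw [setLIntegral_congr_fun measurableSet_Ioo hangle, setLIntegral_indicator measurableSet_Ioo,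
      Set.inter_eq_left.2 (Set.Ioo_subset_Ioo_right hz.le),
      lintegral_mul_const' _ _ ENNReal.ofReal_ne_top, lintegral_radialDensity (norm_nonneg z) hz,
      ← ENNReal.ofReal_mul (by positivity), ← ENNReal.ofReal_mul (by positivity)]
    congr 1
    field_simp
  · have hcirc : Measurable fun p : ℝ × ℝ => circleMap 0 p.2 p.1 :=
      measurable_circleMap_zero.comp measurable_swap
    have hρ := measurable_radialDensity
    exact Measurable.aemeasurable (by simp only [Function.uncurry_def]; fun_prop)

lemma setLIntegral_re_div_le (hz : ‖z‖ < 1) (E : Set ℂ) :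
    ∫⁻ w in E, ENNReal.ofReal (z / w).re ∂hyperbolicMeasure ≤
      ENNReal.ofReal ((1 + ‖z‖ ^ 2) / 2) * hyperbolicMeasure E + ENNReal.ofReal (‖z‖ ^ 2 / 2) := by
  calc ∫⁻ w in E, ENNReal.ofReal (z / w).re ∂hyperbolicMeasure
      ≤ ∫⁻ w in E, (ENNReal.ofReal ((1 + ‖z‖ ^ 2) / 2) +
          ENNReal.ofReal ((z / w).re - (1 + ‖z‖ ^ 2) / 2)) ∂hyperbolicMeasure := by
        refine lintegral_mono fun w => ?_
        refine le_of_eq_of_le ?_ ENNReal.ofReal_add_le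
        rw [add_sub_cancel]
    _ ≤ _ := by
        rw [lintegral_add_left measurable_const, setLIntegral_const, ← lintegral_re_div_sub hz]
        gcongr
        exact Measure.restrict_le_self

/-- The choice `‖z‖² = μ(E) / (1 + μ(E))` makes `{w | (1 + ‖z‖²) / 2 < (z / w).re}` a set of
measure `μ(E)`. -/
lemma setLIntegral_re_div_le_isoProfile (G : ℂ) {E : Set ℂ} (hE : hyperbolicMeasure E ≠ ⊤) :
    ∫⁻ w in E, ENNReal.ofReal (G / w).re ∂hyperbolicMeasure ≤
      ENNReal.ofReal (‖G‖ * isoProfile (hyperbolicMeasure E).toReal) := by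
  rcases eq_or_ne (hyperbolicMeasure E) 0 with hE0 | hE0
  · simp [setLIntegral_measure_zero _ _ hE0]
  rcases eq_or_ne G 0 with rfl | hG
  · simp
  set M := (hyperbolicMeasure E).toReal with hM
  have hM0 : 0 < M := ENNReal.toReal_pos hE0 hE
  have hG0 : 0 < ‖G‖ := norm_pos_iff.2 hG
  set δ := √(M / (1 + M))
  have hδ0 : 0 < δ := Real.sqrt_pos.2 (by positivity)
  have hδ2 : δ ^ 2 = M / (1 + M) := Real.sq_sqrt (by positivity)
  have hδ1 : δ < 1 := by
    rw [← sq_lt_one_iff₀ hδ0.le, hδ2, div_lt_one (by positivity)]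
    linarith
  set z : ℂ := (δ / ‖G‖ : ℝ) * G
  have hz : ‖z‖ = δ := by
    rw [norm_mul, Complex.norm_real, Real.norm_of_nonneg (by positivity),
      div_mul_cancel₀ _ hG0.ne']
  have hscale : ∀ w, (G / w).re = ‖G‖ / δ * (z / w).re := by
    intro w
    rw [mul_div_assoc, Complex.re_ofReal_mul, ← mul_assoc, div_mul_div_cancel₀ hδ0.ne',
      div_self hG0.ne', one_mul]
  have hiso : isoProfile M = M / δ := by
    rw [isoProfile, eq_div_iff hδ0.ne', ← Real.sqrt_mul (by positivity),
      Real.sqrt_eq_iff_mul_self_eq (by positivity) hM0.le]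
    field_simp
  simp_rw [hscale, ENNReal.ofReal_mul (div_pos hG0 hδ0).le]
  rw [lintegral_const_mul' _ _ ENNReal.ofReal_ne_top]
  refine (mul_le_mul_right (setLIntegral_re_div_le (hz.trans_lt hδ1) E) _).trans_eq ?_
  rw [hz, ← ENNReal.ofReal_toReal hE, ← hM, ← ENNReal.ofReal_mul (by positivity),
    ← ENNReal.ofReal_add (by positivity) (by positivity), ← ENNReal.ofReal_mul (by positivity),
    hiso, hδ2]
  congr 1
  field_simp
  ring

end Bathtub

/-! ### Averaging over the geodesic rays -/

/-- A nonnegative function on the plane which is continuous, vanishes outside the open unit disc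
and is differentiable in it. -/
structure DiskTestFunction (u : ℂ → ℝ) : Prop where
  continuous : Continuous u
  nonneg : ∀ ζ, 0 ≤ u ζ
  eq_zero : ∀ ζ, 1 ≤ ‖ζ‖ → u ζ = 0
  differentiableAt : ∀ ζ, ‖ζ‖ < 1 → DifferentiableAt ℝ u ζ

lemma DiskTestFunction.bddAbove {u : ℂ → ℝ} (hu : DiskTestFunction u) :
    BddAbove (Set.range u) := by
  refine hu.continuous.bddAbove_range_of_hasCompactSupport ?_
  refine HasCompactSupport.intro (isCompact_closedBall (0 : ℂ) 1) fun ζ hζ => hu.eq_zero ζ ?_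
  exact (lt_of_not_ge fun h => hζ (mem_closedBall_zero_iff.2 h)).le

/-- The contribution of the point `ζ` to the average of `∫ a (u) (1 + V) |du|` over the geodesic
rays issuing from `z`, where `V` is the hyperbolic measure of the disc about `z` that `ζ` bounds. -/
noncomputable def rayKernel (u : ℂ → ℝ) (a : ℝ → ENNReal) (z ζ : ℂ) : ENNReal :=
  ENNReal.ofReal (1 - ‖ζ‖ ^ 2) * ENNReal.ofReal (-gradient u ζ / diskInvolution ζ z).re *
    (Set.Iio (u z)).indicator a (u ζ)

section Rays

variable {u : ℂ → ℝ} {a : ℝ → ENNReal} {z w ζ : ℂ}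

lemma norm_gradient (u : ℂ → ℝ) (ζ : ℂ) : ‖gradient u ζ‖ = ‖fderiv ℝ u ζ‖ := by
  rw [← toDual_gradient, LinearIsometryEquiv.norm_map]

lemma measurable_gradient (u : ℂ → ℝ) : Measurable (gradient u) :=
  (InnerProductSpace.toDual ℝ ℂ).symm.continuous.measurable.comp (measurable_fderiv ℝ u)

lemma fderiv_ofReal_mul_inv_conj (u : ℂ → ℝ) (ζ w : ℂ) (c : ℝ) :
    fderiv ℝ u ζ (c * ((starRingEnd ℂ) w)⁻¹) = c * (gradient u ζ / w).re := by
  rw [← inner_gradient_left, Complex.inner, mul_assoc, Complex.re_ofReal_mul, ← map_inv₀,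
    ← map_mul, Complex.conj_re, div_eq_inv_mul]

lemma measurable_rayKernel (hu : Measurable u) (ha : Measurable a) :
    Measurable fun p : ℂ × ℂ => rayKernel u a p.1 p.2 := by
  have hτ : Measurable fun p : ℂ × ℂ => diskInvolution p.2 p.1 :=
    measurable_diskInvolution.comp measurable_swap
  have hgrad : Measurable fun p : ℂ × ℂ => gradient u p.2 :=
    (measurable_gradient u).comp measurable_snd
  have hind : Measurable ({p : ℂ × ℂ | u p.2 < u p.1}.indicator fun p => a (u p.2)) :=
    (by fun_prop : Measurable fun p : ℂ × ℂ => a (u p.2)).indicator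
      (measurableSet_lt (hu.comp measurable_snd) (hu.comp measurable_fst))
  have := Complex.measurable_re
  exact Measurable.mul (by fun_prop) hind

lemma diskInvolution_diskInvolution_left (hz : ‖z‖ < 1) (hw : ‖w‖ ≤ 1) :
    diskInvolution (diskInvolution z w) z =
      -w * (starRingEnd ℂ) (1 - (starRingEnd ℂ) z * w) / (1 - (starRingEnd ℂ) z * w) := by
  have hz' := one_sub_sq_norm_ne_zero hz
  have hd := one_sub_conj_mul_ne_zero hz hw
  have hd' := (map_ne_zero (starRingEnd ℂ)).2 hd
  have hnum : diskInvolution z w - z =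
      -w * (1 - (‖z‖ : ℂ) ^ 2) / (1 - (starRingEnd ℂ) z * w) := by
    rw [diskInvolution, ← Complex.mul_conj', eq_div_iff hd, sub_mul, div_mul_cancel₀ _ hd]
    ring
  have hden : 1 - (starRingEnd ℂ) (diskInvolution z w) * z =
      (1 - (‖z‖ : ℂ) ^ 2) / (starRingEnd ℂ) (1 - (starRingEnd ℂ) z * w) := by
    rw [diskInvolution, map_div₀, ← Complex.mul_conj', eq_div_iff hd', sub_mul, mul_right_comm,
      div_mul_cancel₀ _ hd']
    simp only [map_sub, map_mul, map_one, Complex.conj_conj]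
    ring
  rw [diskInvolution, hnum, hden]
  field_simp

lemma deriv_diskInvolution_mul_self (hz : ‖z‖ < 1) (hw : ‖w‖ < 1) :
    -(1 - (‖z‖ : ℂ) ^ 2) / (1 - (starRingEnd ℂ) z * w) ^ 2 * w =
      (‖w‖ ^ 2 / (1 - ‖w‖ ^ 2) * (1 - ‖diskInvolution z w‖ ^ 2) : ℝ) *
        ((starRingEnd ℂ) (diskInvolution (diskInvolution z w) z))⁻¹ := by
  rcases eq_or_ne w 0 with rfl | hw0
  · simp
  have hw' := one_sub_sq_norm_ne_zero hw
  have hd := one_sub_conj_mul_ne_zero hz hw.le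
  rw [one_sub_sq_norm_diskInvolution hz hw.le, diskInvolution_diskInvolution_left hz hw.le,
    map_div₀, map_mul, map_neg, Complex.conj_conj]
  generalize 1 - (starRingEnd ℂ) z * w = d at hd
  have hdc := (map_ne_zero (starRingEnd ℂ)).2 hd
  have hwc := (map_ne_zero (starRingEnd ℂ)).2 hw0
  push_cast
  rw [← Complex.mul_conj' d, inv_div, div_mul_div_comm, ← mul_assoc, div_mul_div_comm,
    div_mul_eq_mul_div, div_eq_div_iff]
  · simp only [← Complex.mul_conj' w]
    ring
  · exact pow_ne_zero 2 hd
  · exact mul_ne_zero (mul_ne_zero hw' (mul_ne_zero hd hdc)) (mul_ne_zero (neg_ne_zero.2 hwc) hd)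

lemma hasDerivAt_comp_ray (hz : ‖z‖ < 1) {r θ : ℝ} (hr0 : 0 < r) (hr1 : r < 1)
    (hu : DifferentiableAt ℝ u (diskInvolution z (circleMap 0 r θ))) :
    HasDerivAt (fun r => u (diskInvolution z (circleMap 0 r θ)))
      (r / (1 - r ^ 2) * (1 - ‖diskInvolution z (circleMap 0 r θ)‖ ^ 2) *
        (gradient u (diskInvolution z (circleMap 0 r θ)) /
          diskInvolution (diskInvolution z (circleMap 0 r θ)) z).re) r := by
  have hnorm : ‖circleMap 0 r θ‖ = r := by rw [norm_circleMap_zero, abs_of_pos hr0]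
  have hw : ‖circleMap 0 r θ‖ < 1 := hnorm.trans_lt hr1
  have hcircle : HasDerivAt (fun r : ℝ => circleMap 0 r θ) (circleMap 0 r θ / r) r := by
    have hr : (r : ℂ) ≠ 0 := by exact_mod_cast hr0.ne'
    simpa [circleMap, hr] using
      (Complex.ofRealCLM.hasDerivAt (x := r)).mul_const (Complex.exp (θ * Complex.I))
  have hray := hu.hasFDerivAt.comp_hasDerivAt r
    ((hasDerivAt_diskInvolution hz hw.le).comp r hcircle)
  refine hray.congr_deriv ?_
  rw [← fderiv_ofReal_mul_inv_conj, ← mul_div_assoc, deriv_diskInvolution_mul_self hz hw, hnorm]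
  congr 1
  have hr : (r : ℂ) ≠ 0 := by exact_mod_cast hr0.ne'
  push_cast
  field_simp

lemma continuousOn_comp_ray (hu : Continuous u) (hz : ‖z‖ < 1) (θ : ℝ) :
    ContinuousOn (fun r : ℝ => u (diskInvolution z (circleMap 0 r θ))) (Set.Icc 0 1) := by
  intro r hr
  have hr1 : ‖circleMap 0 r θ‖ ≤ 1 := by rw [norm_circleMap_zero, abs_of_nonneg hr.1]; exact hr.2
  have hcircle : Continuous fun r : ℝ => circleMap 0 r θ := by unfold circleMap; fun_prop
  exact (hu.continuousAt.comp ((hasDerivAt_diskInvolution hz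
    hr1).continuousAt.comp (f := fun r : ℝ => circleMap 0 r θ)
      hcircle.continuousAt)).continuousWithinAt

lemma DiskTestFunction.lintegral_superlevel_ray_le (hu : DiskTestFunction u) (hz : ‖z‖ < 1)
    (a : ℝ → ENNReal) (θ : ℝ) :
    ∫⁻ t in Set.Ioo 0 (u z), a t * (1 + ∫⁻ r in Set.Ioo 0 1, radialDensity r *
        {w | t < u (diskInvolution z w)}.indicator 1 (circleMap 0 r θ)) ≤
      ENNReal.ofReal (1 / 2) * ∫⁻ r in Set.Ioo 0 1,
        radialDensity r * rayKernel u a z (diskInvolution z (circleMap 0 r θ)) := by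
  have hv0 : u (diskInvolution z (circleMap 0 0 θ)) = u z := by simp [diskInvolution_zero]
  have hv1 : u (diskInvolution z (circleMap 0 1 θ)) = 0 :=
    hu.eq_zero _ (norm_diskInvolution_eq_one hz (by simp [norm_circleMap_zero])).ge
  have hnorm : ∀ r ∈ Set.Ioo (0 : ℝ) 1, ‖diskInvolution z (circleMap 0 r θ)‖ < 1 := by
    intro r hr
    refine norm_diskInvolution_lt_one hz ?_
    rw [norm_circleMap_zero, abs_of_pos hr.1]
    exact hr.2
  have hlast := lintegral_superlevel_le_lintegral_neg_deriv zero_le_one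
    (continuousOn_comp_ray hu.continuous hz θ)
    (fun r hr => hasDerivAt_comp_ray hz hr.1 hr.2 (hu.differentiableAt _ (hnorm r hr)))
    a radialDensity 1
  rw [hv0, hv1] at hlast
  convert hlast using 1
  · refine lintegral_congr fun t => ?_
    congr 3 with r
    simp [Set.indicator]
  · rw [← lintegral_const_mul' _ _ ENNReal.ofReal_ne_top]
    refine setLIntegral_congr_fun measurableSet_Ioo fun r hr => ?_
    have hr' : 0 < 1 - r ^ 2 := by nlinarith [hr.1, hr.2]
    have hr0 := hr.1
    have hζ := one_sub_sq_norm_pos (hnorm r hr)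
    rw [one_add_lintegral_radialDensity hr.1.le hr.2, rayKernel, radialDensity, neg_div,
      Complex.neg_re, ← mul_neg, ENNReal.ofReal_mul (by positivity),
      ENNReal.ofReal_mul (by positivity)]
    have hhalf : ENNReal.ofReal (1 / 2) * ENNReal.ofReal (2 * r / (1 - r ^ 2) ^ 2) =
        ENNReal.ofReal (r / (1 - r ^ 2)) * ENNReal.ofReal (1 / (1 - r ^ 2)) := by
      rw [← ENNReal.ofReal_mul (by positivity), ← ENNReal.ofReal_mul (by positivity)]
      congr 1
      field_simp
    rw [← mul_assoc, hhalf]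
    ring

lemma hyperbolicMeasure_superlevel_diskInvolution (hu : Measurable u) (hz : ‖z‖ < 1) (t : ℝ) :
    hyperbolicMeasure {w | t < u (diskInvolution z w)} =
      distributionFunction hyperbolicMeasure u t := by
  have hτ : Measurable (diskInvolution z) :=
    measurable_diskInvolution.comp (measurable_const.prodMk measurable_id)
  rw [distributionFunction, ← lintegral_indicator_one (measurableSet_lt measurable_const hu),
    ← lintegral_comp_diskInvolution hz,
    ← lintegral_indicator_one (s := {w | t < u (diskInvolution z w)})
      (measurableSet_lt measurable_const (hu.comp hτ))]
  rfl

lemma lintegral_angle_superlevel_ray (hu : Measurable u) (ha : Measurable a) (hz : ‖z‖ < 1) :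
    ∫⁻ θ in Set.Ioo (-Real.pi) Real.pi, ∫⁻ t in Set.Ioo 0 (u z),
        a t * (1 + ∫⁻ r in Set.Ioo 0 1, radialDensity r *
          {w | t < u (diskInvolution z w)}.indicator 1 (circleMap 0 r θ)) =
      ENNReal.ofReal (2 * Real.pi) * ∫⁻ t in Set.Ioo 0 (u z),
        a t * (1 + distributionFunction hyperbolicMeasure u t) := by
  have hτ : Measurable (diskInvolution z) :=
    measurable_diskInvolution.comp (measurable_const.prodMk measurable_id)
  have hint : Measurable fun p : (ℝ × ℝ) × ℝ => radialDensity p.2 *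
      {w | p.1.2 < u (diskInvolution z w)}.indicator (1 : ℂ → ENNReal)
        (circleMap 0 p.2 p.1.1) := by
    have hcirc : Measurable fun p : (ℝ × ℝ) × ℝ => circleMap 0 p.2 p.1.1 :=
      measurable_circleMap_zero.comp (f := fun p : (ℝ × ℝ) × ℝ => (p.2, p.1.1)) (by fun_prop)
    have hset : MeasurableSet {p : (ℝ × ℝ) × ℝ |
        p.1.2 < u (diskInvolution z (circleMap 0 p.2 p.1.1))} :=
      measurableSet_lt (by fun_prop) (hu.comp (hτ.comp hcirc))
    exact (measurable_radialDensity.comp measurable_snd).mul (measurable_const.indicator hset)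
  have hinner := hint.lintegral_prod_right' (ν := volume.restrict (Set.Ioo (0 : ℝ) 1))
  rw [lintegral_lintegral_swap
    ((ha.comp measurable_snd).mul (measurable_const.add hinner)).aemeasurable,
    ← lintegral_const_mul' _ _ ENNReal.ofReal_ne_top]
  refine lintegral_congr fun t => ?_
  have hslice : Measurable fun θ => ∫⁻ r in Set.Ioo 0 1, radialDensity r *
      {w | t < u (diskInvolution z w)}.indicator (1 : ℂ → ENNReal) (circleMap 0 r θ) :=
    hinner.comp (measurable_id.prodMk measurable_const)
  have hset : MeasurableSet {w | t < u (diskInvolution z w)} :=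
    measurableSet_lt measurable_const (hu.comp hτ)
  rw [lintegral_const_mul _ (by fun_prop), lintegral_add_left measurable_const,
    ← lintegral_hyperbolicMeasure_eq_lintegral_circleMap (measurable_one.indicator hset),
    lintegral_indicator_one hset, hyperbolicMeasure_superlevel_diskInvolution hu hz,
    setLIntegral_const, Real.volume_Ioo, sub_neg_eq_add, ← two_mul]
  ring

lemma DiskTestFunction.lintegral_superlevel_le_lintegral_rayKernel (hu : DiskTestFunction u)
    (ha : Measurable a) (hz : ‖z‖ < 1) :
    ∫⁻ t in Set.Ioo 0 (u z), a t * (1 + distributionFunction hyperbolicMeasure u t) ≤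
      ENNReal.ofReal (1 / 2) * ∫⁻ ζ, rayKernel u a z ζ ∂hyperbolicMeasure := by
  have hτ : Measurable (diskInvolution z) :=
    measurable_diskInvolution.comp (measurable_const.prodMk measurable_id)
  have hker : Measurable fun w => rayKernel u a z (diskInvolution z w) :=
    (measurable_rayKernel hu.continuous.measurable ha).comp
      (f := fun w => (z, diskInvolution z w)) (measurable_const.prodMk hτ)
  have hpi : ENNReal.ofReal (2 * Real.pi) ≠ 0 := by simpa using Real.pi_pos
  rw [← ENNReal.mul_le_mul_iff_right hpi ENNReal.ofReal_ne_top,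
    ← lintegral_angle_superlevel_ray hu.continuous.measurable ha hz, mul_left_comm,
    ← lintegral_comp_diskInvolution hz (rayKernel u a z),
    lintegral_hyperbolicMeasure_eq_lintegral_circleMap hker,
    ← lintegral_const_mul' _ _ ENNReal.ofReal_ne_top]
  exact lintegral_mono fun θ => hu.lintegral_superlevel_ray_le hz a θ

/-- In the variable `w = diskInvolution ζ z` the kernel is a half-plane kernel on a superlevel set,
to which the bathtub inequality applies. -/
lemma lintegral_rayKernel_le (hu : Measurable u) (a : ℝ → ENNReal) (hζ : ‖ζ‖ < 1)
    (hfin : distributionFunction hyperbolicMeasure u (u ζ) ≠ ⊤) :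
    ∫⁻ z, rayKernel u a z ζ ∂hyperbolicMeasure ≤
      ENNReal.ofReal ((1 - ‖ζ‖ ^ 2) * ‖fderiv ℝ u ζ‖ *
        isoProfile (distributionFunction hyperbolicMeasure u (u ζ)).toReal) * a (u ζ) := by
  set E : Set ℂ := {w | u ζ < u (diskInvolution ζ w)}
  have hE : MeasurableSet E := measurableSet_lt measurable_const
    (hu.comp (measurable_diskInvolution.comp (measurable_const.prodMk measurable_id)))
  have hμE := hyperbolicMeasure_superlevel_diskInvolution hu hζ (u ζ)
  have := Complex.measurable_re
  calc ∫⁻ z, rayKernel u a z ζ ∂hyperbolicMeasure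
      = ∫⁻ w, rayKernel u a (diskInvolution ζ w) ζ ∂hyperbolicMeasure :=
        (lintegral_comp_diskInvolution hζ fun z => rayKernel u a z ζ).symm
    _ = ∫⁻ w, ENNReal.ofReal (1 - ‖ζ‖ ^ 2) *
          E.indicator (fun w => ENNReal.ofReal (-gradient u ζ / w).re) w * a (u ζ)
          ∂hyperbolicMeasure := by
        refine lintegral_congr_ae ?_
        filter_upwards [ae_hyperbolicMeasure_norm_lt_one] with w hw
        rw [rayKernel, diskInvolution_diskInvolution hζ hw.le]
        by_cases hwE : w ∈ E
        · rw [Set.indicator_of_mem hwE, Set.indicator_of_mem (Set.mem_Iio.2 hwE)]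
        · rw [Set.indicator_of_notMem hwE, Set.indicator_of_notMem (Set.mem_Iio.not.2 hwE),
            mul_zero, mul_zero, zero_mul]
    _ = ENNReal.ofReal (1 - ‖ζ‖ ^ 2) *
          (∫⁻ w in E, ENNReal.ofReal (-gradient u ζ / w).re ∂hyperbolicMeasure) * a (u ζ) := by
        have hind : Measurable (E.indicator fun w => ENNReal.ofReal (-gradient u ζ / w).re) :=
          Measurable.indicator (by fun_prop) hE
        rw [lintegral_mul_const _ (hind.const_mul _),
          lintegral_const_mul' _ _ ENNReal.ofReal_ne_top, lintegral_indicator hE]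
    _ ≤ _ := by
        rw [mul_assoc (1 - ‖ζ‖ ^ 2), ENNReal.ofReal_mul (one_sub_sq_norm_pos hζ).le,
          ← norm_gradient, ← norm_neg (gradient u ζ), ← hμE]
        gcongr
        exact setLIntegral_re_div_le_isoProfile _ (hμE.trans_ne hfin)

lemma DiskTestFunction.lintegral_mul_distributionFunction_le (hu : DiskTestFunction u)
    (hfin : ∀ t, 0 < t → distributionFunction hyperbolicMeasure u t ≠ ⊤) (ha : Measurable a)
    (ha0 : a 0 = 0) :
    ∫⁻ t in Set.Ioi 0, a t * (1 + distributionFunction hyperbolicMeasure u t) *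
        distributionFunction hyperbolicMeasure u t ≤
      ENNReal.ofReal (1 / 2) * ∫⁻ ζ, ENNReal.ofReal ((1 - ‖ζ‖ ^ 2) * ‖fderiv ℝ u ζ‖ *
        isoProfile (distributionFunction hyperbolicMeasure u (u ζ)).toReal) * a (u ζ)
        ∂hyperbolicMeasure := by
  have hum := hu.continuous.measurable
  have hM : Measurable (distributionFunction hyperbolicMeasure u) :=
    antitone_distributionFunction.measurable
  rw [lintegral_mul_distributionFunction (by fun_prop) hum]
  calc ∫⁻ z, (∫⁻ t in Set.Ioo 0 (u z), a t * (1 + distributionFunction hyperbolicMeasure u t))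
        ∂hyperbolicMeasure
      ≤ ∫⁻ z, ENNReal.ofReal (1 / 2) * ∫⁻ ζ, rayKernel u a z ζ ∂hyperbolicMeasure
          ∂hyperbolicMeasure := by
        refine lintegral_mono_ae ?_
        filter_upwards [ae_hyperbolicMeasure_norm_lt_one] with z hz
        exact hu.lintegral_superlevel_le_lintegral_rayKernel ha hz
    _ = ENNReal.ofReal (1 / 2) * ∫⁻ ζ, ∫⁻ z, rayKernel u a z ζ ∂hyperbolicMeasure
          ∂hyperbolicMeasure := by
        rw [lintegral_const_mul' _ _ ENNReal.ofReal_ne_top,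
          lintegral_lintegral_swap (measurable_rayKernel hum ha).aemeasurable]
    _ ≤ _ := by
        refine mul_le_mul_right (lintegral_mono_ae ?_) _
        filter_upwards [ae_hyperbolicMeasure_norm_lt_one] with ζ hζ
        rcases (hu.nonneg ζ).eq_or_lt with h0 | h0
        · simp [rayKernel, ← h0, ha0, Set.indicator_apply]
        · exact lintegral_rayKernel_le hum a hζ (hfin _ h0)

end Rays

/-! ### The Sobolev inequality -/

section Sobolev

variable {u : ℂ → ℝ}

lemma lintegral_ball_sq_norm_fderiv (u : ℂ → ℝ) :
    ENNReal.ofReal (1 / Real.pi) * ∫⁻ ζ in ball (0 : ℂ) 1, ENNReal.ofReal (‖fderiv ℝ u ζ‖ ^ 2) =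
      ∫⁻ ζ, ENNReal.ofReal (((1 - ‖ζ‖ ^ 2) * ‖fderiv ℝ u ζ‖) ^ 2) ∂hyperbolicMeasure := by
  rw [lintegral_hyperbolicMeasure, ← lintegral_const_mul' _ _ ENNReal.ofReal_ne_top]
  refine setLIntegral_congr_fun measurableSet_ball fun ζ hζ => ?_
  have hζ' := one_sub_sq_norm_pos (mem_ball_zero_iff.1 hζ)
  rw [← ENNReal.ofReal_mul (by positivity), ← ENNReal.ofReal_mul (by positivity)]
  congr 1
  field_simp

lemma ofReal_div_isoProfile_mul {M : ENNReal} (hM : M ≠ ⊤) {x : ℝ} (hx : 0 ≤ x) :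
    ENNReal.ofReal (x / isoProfile M.toReal) * (1 + M) * M =
      ENNReal.ofReal (x * isoProfile M.toReal) := by
  lift M to NNReal using hM
  rcases eq_or_ne M 0 with rfl | hM0
  · simp [isoProfile]
  have hpos : (0 : ℝ) < M := by positivity
  have hiso := isoProfile_pos hpos
  have hsq : isoProfile M ^ 2 = M * (1 + M) := Real.sq_sqrt (by positivity)
  have hM1 : 1 + (M : ENNReal) = ENNReal.ofReal (1 + M) := by
    rw [ENNReal.ofReal_add zero_le_one hpos.le, ENNReal.ofReal_one, ENNReal.ofReal_coe_nnreal]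
  rw [ENNReal.coe_toReal, hM1, ← ENNReal.ofReal_coe_nnreal, ← ENNReal.ofReal_mul (by positivity),
    ← ENNReal.ofReal_mul (by positivity)]
  congr 1
  field_simp
  rw [hsq]
  ring

lemma four_mul_ofReal_mul_ofReal_div_le (x i : ℝ) {y : ℝ} (hy : 0 ≤ y) :
    4 * (ENNReal.ofReal (x * i) * ENNReal.ofReal (y / i)) ≤
      ENNReal.ofReal (x ^ 2) + 4 * ENNReal.ofReal (y ^ 2) := by
  rcases le_or_gt i 0 with hi | hi
  · simp [ENNReal.ofReal_of_nonpos (div_nonpos_of_nonneg_of_nonpos hy hi)]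
  rw [← ENNReal.ofReal_mul' (by positivity), ← ENNReal.ofReal_ofNat 4,
    ← ENNReal.ofReal_mul (by norm_num), ← ENNReal.ofReal_mul (by norm_num),
    ← ENNReal.ofReal_add (by positivity) (by positivity)]
  refine ENNReal.ofReal_le_ofReal ?_
  calc 4 * (x * i * (y / i)) = 4 * (x * y) := by field_simp
    _ ≤ x ^ 2 + 4 * y ^ 2 := by nlinarith [sq_nonneg (x - 2 * y)]

/-- The constants make AM-GM sharp: `4 x y ≤ x² + 4 y²` for `x = (1 − |ζ|²) |∇u|`, `y = β (u)`. -/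
lemma DiskTestFunction.lintegral_mul_isoProfile_le (hu : DiskTestFunction u)
    (hfin : ∀ t, 0 < t → distributionFunction hyperbolicMeasure u t ≠ ⊤) {β : ℝ → ℝ}
    (hβ : Measurable β) (hβ0 : β 0 = 0) (hβ_nonneg : ∀ t, 0 ≤ t → 0 ≤ β t) :
    8 * (∫⁻ t in Set.Ioi 0, ENNReal.ofReal
        (β t * isoProfile (distributionFunction hyperbolicMeasure u t).toReal)) ≤
      ENNReal.ofReal (1 / Real.pi) *
          (∫⁻ ζ in ball (0 : ℂ) 1, ENNReal.ofReal (‖fderiv ℝ u ζ‖ ^ 2)) +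
        4 * ∫⁻ ζ, ENNReal.ofReal (β (u ζ) ^ 2) ∂hyperbolicMeasure := by
  set M := distributionFunction hyperbolicMeasure u
  have hM : Measurable M := antitone_distributionFunction.measurable
  have hiso := continuous_isoProfile.measurable
  have : Measurable fun ζ => ‖fderiv ℝ u ζ‖ := (measurable_fderiv ℝ u).norm
  have hmain := hu.lintegral_mul_distributionFunction_le hfin
    (a := fun t => ENNReal.ofReal (β t / isoProfile (M t).toReal)) (by fun_prop) (by simp [hβ0])
  rw [setLIntegral_congr_fun measurableSet_Ioi fun t ht =>
    ofReal_div_isoProfile_mul (hfin t ht) (hβ_nonneg t (le_of_lt ht))] at hmain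
  calc 8 * (∫⁻ t in Set.Ioi 0, ENNReal.ofReal (β t * isoProfile (M t).toReal))
      ≤ ∫⁻ ζ, 4 * (ENNReal.ofReal ((1 - ‖ζ‖ ^ 2) * ‖fderiv ℝ u ζ‖ * isoProfile (M (u ζ)).toReal) *
          ENNReal.ofReal (β (u ζ) / isoProfile (M (u ζ)).toReal)) ∂hyperbolicMeasure := by
        refine (mul_le_mul_right hmain 8).trans_eq ?_
        rw [lintegral_const_mul' _ _ (by norm_num), ← mul_assoc]
        congr 1
        rw [← ENNReal.ofReal_ofNat 8, ← ENNReal.ofReal_mul (by norm_num)]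
        norm_num
    _ ≤ ∫⁻ ζ, (ENNReal.ofReal (((1 - ‖ζ‖ ^ 2) * ‖fderiv ℝ u ζ‖) ^ 2) +
          4 * ENNReal.ofReal (β (u ζ) ^ 2)) ∂hyperbolicMeasure :=
        lintegral_mono fun ζ => four_mul_ofReal_mul_ofReal_div_le _ _ (hβ_nonneg _ (hu.nonneg ζ))
    _ = _ := by
        rw [lintegral_add_left (by fun_prop), lintegral_const_mul' _ _ (by norm_num),
          lintegral_ball_sq_norm_fderiv]

lemma DiskTestFunction.const_mul (hu : DiskTestFunction u) {c : ℝ} (hc : 0 ≤ c) :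
    DiskTestFunction fun ζ => c * u ζ where
  continuous := hu.continuous.const_mul c
  nonneg ζ := mul_nonneg hc (hu.nonneg ζ)
  eq_zero ζ hζ := by rw [hu.eq_zero ζ hζ, mul_zero]
  differentiableAt ζ hζ := (hu.differentiableAt ζ hζ).const_mul c

lemma lintegral_ofReal_const_mul_rpow {α : Type*} [MeasurableSpace α] (μ : Measure α) {u : α → ℝ}
    (hu : ∀ x, 0 ≤ u x) {c : ℝ} (hc : 0 ≤ c) (p : ℝ) :
    ∫⁻ x, ENNReal.ofReal ((c * u x) ^ p) ∂μ =
      ENNReal.ofReal (c ^ p) * ∫⁻ x, ENNReal.ofReal (u x ^ p) ∂μ := by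
  rw [← lintegral_const_mul' _ _ ENNReal.ofReal_ne_top]
  refine lintegral_congr fun x => ?_
  rw [Real.mul_rpow hc (hu x), ENNReal.ofReal_mul (by positivity)]

lemma DiskTestFunction.lintegral_sq_norm_fderiv_const_mul (hu : DiskTestFunction u) {c : ℝ} :
    ∫⁻ ζ in ball (0 : ℂ) 1, ENNReal.ofReal (‖fderiv ℝ (fun z => c * u z) ζ‖ ^ 2) =
      ENNReal.ofReal (c ^ 2) *
        ∫⁻ ζ in ball (0 : ℂ) 1, ENNReal.ofReal (‖fderiv ℝ u ζ‖ ^ 2) := by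
  rw [← lintegral_const_mul' _ _ ENNReal.ofReal_ne_top]
  refine setLIntegral_congr_fun measurableSet_ball fun ζ hζ => ?_
  rw [fderiv_const_mul (hu.differentiableAt ζ (mem_ball_zero_iff.1 hζ)), norm_smul, mul_pow,
    Real.norm_eq_abs, sq_abs, ENNReal.ofReal_mul (sq_nonneg c)]

lemma DiskTestFunction.sobolev_of_lintegral_eq (hu : DiskTestFunction u) {s : ℝ} (hs : 2 < s)
    (hmass : ∫⁻ ζ, ENNReal.ofReal (u ζ ^ (2 + 2 / s)) ∂hyperbolicMeasure = ENNReal.ofReal (1 / s)) :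
    ENNReal.ofReal s ≤
      ENNReal.ofReal (1 / Real.pi) *
          (∫⁻ ζ in ball (0 : ℂ) 1, ENNReal.ofReal (‖fderiv ℝ u ζ‖ ^ 2)) +
        ENNReal.ofReal (s * (s - 2)) * ∫⁻ ζ, ENNReal.ofReal (u ζ ^ 2) ∂hyperbolicMeasure := by
  have hs0 : 0 < s * (s - 2) := mul_pos (by linarith) (by linarith)
  have hN : NormalizedFunction hyperbolicMeasure s u :=
    ⟨by linarith, hu.continuous.measurable, hu.bddAbove, hu.nonneg, hmass⟩
  have h := hN.inequality_of_isoperimetric hs.le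
    (hu.lintegral_mul_isoProfile_le (fun _ => hN.distributionFunction_ne_top)
      hN.measurable_optimalWeight (by simp [optimalWeight]) fun _ => hN.optimalWeight_nonneg)
  set I := ∫⁻ ζ, ENNReal.ofReal (u ζ ^ 2) ∂hyperbolicMeasure
  rcases eq_or_ne I ⊤ with hI | hI
  · simp [hI, ENNReal.mul_top, hs0]
  have hsplit : ENNReal.ofReal (s ^ 2) = ENNReal.ofReal (2 * s) + ENNReal.ofReal (s * (s - 2)) := by
    rw [← ENNReal.ofReal_add (by linarith) hs0.le]
    ring_nf
  rw [hsplit, add_mul, add_left_comm] at h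
  exact (ENNReal.add_le_add_iff_left (ENNReal.mul_ne_top ENNReal.ofReal_ne_top hI)).1 h

lemma lintegral_sq_eq_top_of_lintegral_rpow_eq_top {α : Type*} [MeasurableSpace α] {μ : Measure α}
    {u : α → ℝ} (hu : ∀ x, 0 ≤ u x) (hbdd : BddAbove (Set.range u)) {p : ℝ} (hp : 2 ≤ p)
    (h : ∫⁻ x, ENNReal.ofReal (u x ^ p) ∂μ = ⊤) : ∫⁻ x, ENNReal.ofReal (u x ^ 2) ∂μ = ⊤ := by
  obtain ⟨C, hC⟩ := hbdd
  have hle (x : α) : ENNReal.ofReal (u x ^ p) ≤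
      ENNReal.ofReal (C ^ (p - 2)) * ENNReal.ofReal (u x ^ 2) := by
    have hC0 : 0 ≤ C := (hu x).trans (hC ⟨x, rfl⟩)
    rw [← ENNReal.ofReal_mul (by positivity)]
    refine ENNReal.ofReal_le_ofReal ?_
    calc u x ^ p = u x ^ (p - 2) * u x ^ 2 := by
          rw [← Real.rpow_natCast, ← Real.rpow_add_of_nonneg (hu x) (by linarith) (by norm_num)]
          norm_num
      _ ≤ C ^ (p - 2) * u x ^ 2 := by
          gcongr ?_ * _
          exact Real.rpow_le_rpow (hu x) (hC ⟨x, rfl⟩) (by linarith)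
  have htop := lintegral_mono (μ := μ) hle
  rw [h, lintegral_const_mul' _ _ ENNReal.ofReal_ne_top, top_le_iff] at htop
  by_contra hne
  exact ENNReal.mul_ne_top ENNReal.ofReal_ne_top hne htop

lemma exists_scaling {s m : ℝ} (hs : 0 < s) (hm : 0 < m) :
    ∃ c, 0 < c ∧ c ^ (2 + 2 / s) = m⁻¹ ∧ c ^ 2 * m ^ (s / (s + 1)) = 1 := by
  refine ⟨m ^ (-(s / (2 * (s + 1)))), by positivity, ?_, ?_⟩
  · rw [← Real.rpow_mul hm.le, ← Real.rpow_neg_one]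
    congr 1
    field_simp
  · rw [← Real.rpow_natCast, ← Real.rpow_mul hm.le, ← Real.rpow_add hm, ← Real.rpow_zero m]
    congr 1
    push_cast
    field_simp
    ring

lemma DiskTestFunction.sobolev (hu : DiskTestFunction u) {s : ℝ} (hs : 2 < s) :
    ENNReal.ofReal s * (ENNReal.ofReal s *
        ∫⁻ ζ, ENNReal.ofReal (u ζ ^ (2 + 2 / s)) ∂hyperbolicMeasure) ^ (s / (s + 1)) ≤
      ENNReal.ofReal (1 / Real.pi) *
          (∫⁻ ζ in ball (0 : ℂ) 1, ENNReal.ofReal (‖fderiv ℝ u ζ‖ ^ 2)) +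
        ENNReal.ofReal (s * (s - 2)) * ∫⁻ ζ, ENNReal.ofReal (u ζ ^ 2) ∂hyperbolicMeasure := by
  have hs0 : 0 < s := by linarith
  set J := ∫⁻ ζ, ENNReal.ofReal (u ζ ^ (2 + 2 / s)) ∂hyperbolicMeasure with hJ
  rcases eq_or_ne J ⊤ with hJ_top | hJ_top
  · have hp : 2 ≤ 2 + 2 / s := le_add_of_nonneg_right (by positivity)
    rw [lintegral_sq_eq_top_of_lintegral_rpow_eq_top hu.nonneg hu.bddAbove hp hJ_top,
      ENNReal.mul_top (by simpa using mul_pos hs0 (sub_pos.2 hs)), add_top]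
    exact le_top
  rcases eq_or_ne J 0 with hJ_zero | hJ_zero
  · rw [hJ_zero, mul_zero, ENNReal.zero_rpow_of_pos (by positivity), mul_zero]
    exact zero_le
  obtain ⟨j, hj, hJ_eq⟩ : ∃ j, 0 < j ∧ J = ENNReal.ofReal j :=
    ⟨J.toReal, ENNReal.toReal_pos hJ_zero hJ_top, (ENNReal.ofReal_toReal hJ_top).symm⟩
  obtain ⟨c, hc, hc_mass, hc_sq⟩ := exists_scaling hs0 (mul_pos hs0 hj)
  have hmass : ∫⁻ ζ, ENNReal.ofReal ((c * u ζ) ^ (2 + 2 / s)) ∂hyperbolicMeasure =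
      ENNReal.ofReal (1 / s) := by
    rw [lintegral_ofReal_const_mul_rpow _ hu.nonneg hc.le, hc_mass, ← hJ, hJ_eq,
      ← ENNReal.ofReal_mul (by positivity)]
    congr 1
    field_simp
  have hsq := lintegral_ofReal_const_mul_rpow hyperbolicMeasure hu.nonneg hc.le 2
  have h := (hu.const_mul hc.le).sobolev_of_lintegral_eq hs hmass
  simp only [Real.rpow_ofNat] at hsq
  rw [hu.lintegral_sq_norm_fderiv_const_mul, hsq, mul_left_comm, mul_left_comm (ENNReal.ofReal _)
    (ENNReal.ofReal (c ^ 2)), ← mul_add] at h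
  rw [hJ_eq, ← ENNReal.ofReal_mul hs0.le, ENNReal.ofReal_rpow_of_pos (by positivity)]
  refine (mul_le_mul_left h _).trans_eq ?_
  rw [mul_right_comm, ← ENNReal.ofReal_mul (by positivity), hc_sq, ENNReal.ofReal_one, one_mul]

end Sobolev

section BoundaryValues

variable {v : ℂ → ℝ}

lemma indicator_ball_eventuallyEq (v : ℂ → ℝ) {ζ : ℂ} (hζ : ‖ζ‖ < 1) :
    (ball 0 1).indicator v =ᶠ[nhds ζ] v :=
  (Set.eqOn_indicator (f := v)).eventuallyEq_of_mem
    (isOpen_ball.mem_nhds (mem_ball_zero_iff.2 hζ))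

lemma diskTestFunction_indicator (hv : ∀ ζ, 0 ≤ v ζ)
    (hlim : ∀ ε > 0, ∃ r < 1, ∀ ζ ∈ ball (0 : ℂ) 1, r < ‖ζ‖ → v ζ < ε)
    (hdiff : ∀ ζ ∈ ball (0 : ℂ) 1, DifferentiableAt ℝ v ζ) :
    DiskTestFunction ((ball 0 1).indicator v) := by
  have hd (ζ : ℂ) (hζ : ‖ζ‖ < 1) : DifferentiableAt ℝ ((ball 0 1).indicator v) ζ :=
    (hdiff ζ (mem_ball_zero_iff.2 hζ)).congr_of_eventuallyEq (indicator_ball_eventuallyEq v hζ)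
  have hzero (ζ : ℂ) (hζ : 1 ≤ ‖ζ‖) : (ball 0 1).indicator v ζ = 0 :=
    Set.indicator_of_notMem (by simpa using hζ) v
  refine ⟨continuous_iff_continuousAt.2 fun ζ => ?_, Set.indicator_nonneg fun z _ => hv z, hzero,
    hd⟩
  rcases lt_or_ge ‖ζ‖ 1 with hζ | hζ
  · exact (hd ζ hζ).continuousAt
  refine continuousAt_iff'.2 fun ε hε => ?_
  obtain ⟨r, hr, hr_lt⟩ := hlim ε hε
  filter_upwards [continuous_norm.continuousAt.eventually_const_lt (hr.trans_le hζ)] with z hz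
  rw [hzero ζ hζ, Real.dist_0_eq_abs, abs_of_nonneg (Set.indicator_nonneg (fun z _ => hv z) z)]
  by_cases hz_ball : z ∈ ball (0 : ℂ) 1
  · rw [Set.indicator_of_mem hz_ball]
    exact hr_lt z hz_ball hz
  · rwa [Set.indicator_of_notMem hz_ball]

lemma sobolev_of_tendsto_boundary (hv : ∀ ζ, 0 ≤ v ζ)
    (hlim : ∀ ε > 0, ∃ r < 1, ∀ ζ ∈ ball (0 : ℂ) 1, r < ‖ζ‖ → v ζ < ε)
    (hdiff : ∀ ζ ∈ ball (0 : ℂ) 1, DifferentiableAt ℝ v ζ) {s : ℝ} (hs : 2 < s) :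
    ENNReal.ofReal s * (ENNReal.ofReal s *
        ∫⁻ ζ, ENNReal.ofReal (v ζ ^ (2 + 2 / s)) ∂hyperbolicMeasure) ^ (s / (s + 1)) ≤
      ENNReal.ofReal (1 / Real.pi) *
          (∫⁻ ζ in ball (0 : ℂ) 1, ENNReal.ofReal (‖fderiv ℝ v ζ‖ ^ 2)) +
        ENNReal.ofReal (s * (s - 2)) * ∫⁻ ζ, ENNReal.ofReal (v ζ ^ 2) ∂hyperbolicMeasure := by
  have hcongr (g : ℝ → ENNReal) : ∫⁻ ζ, g ((ball 0 1).indicator v ζ) ∂hyperbolicMeasure =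
      ∫⁻ ζ, g (v ζ) ∂hyperbolicMeasure := by
    refine lintegral_congr_ae ?_
    filter_upwards [ae_hyperbolicMeasure_norm_lt_one] with ζ hζ
    rw [(indicator_ball_eventuallyEq v hζ).self_of_nhds]
  have henergy : ∫⁻ ζ in ball (0 : ℂ) 1,
      ENNReal.ofReal (‖fderiv ℝ ((ball 0 1).indicator v) ζ‖ ^ 2) =
        ∫⁻ ζ in ball (0 : ℂ) 1, ENNReal.ofReal (‖fderiv ℝ v ζ‖ ^ 2) :=
    setLIntegral_congr_fun measurableSet_ball fun ζ hζ => by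
      rw [(indicator_ball_eventuallyEq v (mem_ball_zero_iff.1 hζ)).fderiv_eq]
  have h := (diskTestFunction_indicator hv hlim hdiff).sobolev hs
  rwa [henergy, hcongr fun x => ENNReal.ofReal (x ^ (2 + 2 / s)),
    hcongr fun x => ENNReal.ofReal (x ^ 2)] at h

end BoundaryValues

lemma sharp_constant_mul_rpow {κ s θ : ℝ} (hκ : 0 < κ) (hs : 2 < s) (hθ : 0 ≤ θ) (A : ENNReal) :
    ENNReal.ofReal (κ / (s - 1) * (s / κ) ^ θ * ((s - 1) / (s - 2))) *
        (ENNReal.ofReal κ * A) ^ θ =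
      ENNReal.ofReal (κ / (s * (s - 2))) * (ENNReal.ofReal s * (ENNReal.ofReal s * A) ^ θ) := by
  have hs0 : 0 < s := by linarith
  have hs1 : 0 < s - 1 := by linarith
  have hs2 : 0 < s - 2 := by linarith
  rw [ENNReal.mul_rpow_of_nonneg _ _ hθ, ENNReal.mul_rpow_of_nonneg _ _ hθ,
    ENNReal.ofReal_rpow_of_pos hκ, ENNReal.ofReal_rpow_of_pos hs0, ← mul_assoc, ← mul_assoc,
    ← mul_assoc, ← ENNReal.ofReal_mul (by positivity), ← ENNReal.ofReal_mul (by positivity),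
    ← ENNReal.ofReal_mul (by positivity)]
  congr 2
  rw [Real.div_rpow hs0.le hκ.le]
  field_simp

lemma sobolev_norm_rpow {E : Type*} [SeminormedAddCommGroup E] {k q p : ℝ} (hk : 0 < k)
    (hkq : 2 < k * q) (hp : p = q + 1 / k) {f : ℂ → E}
    (hlim : ∀ ε > 0, ∃ r < 1, ∀ ζ ∈ ball (0 : ℂ) 1, r < ‖ζ‖ → ‖f ζ‖ < ε)
    (hdiff : ∀ ζ ∈ ball (0 : ℂ) 1, DifferentiableAt ℝ (fun z => ‖f z‖ ^ (q / 2)) ζ) :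
    ENNReal.ofReal (k * q) * (ENNReal.ofReal (k * q) *
        ∫⁻ ζ, ENNReal.ofReal (‖f ζ‖ ^ p) ∂hyperbolicMeasure) ^ (q / p) ≤
      ENNReal.ofReal (1 / Real.pi) * (∫⁻ ζ in ball (0 : ℂ) 1,
          ENNReal.ofReal (‖fderiv ℝ (fun z => ‖f z‖ ^ (q / 2)) ζ‖ ^ 2)) +
        ENNReal.ofReal (k * q * (k * q - 2)) *
          ∫⁻ ζ, ENNReal.ofReal (‖f ζ‖ ^ q) ∂hyperbolicMeasure := by
  have hq : 0 < q := pos_of_mul_pos_right (by linarith) hk.le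
  have hlim' (ε : ℝ) (hε : 0 < ε) :
      ∃ r < 1, ∀ ζ ∈ ball (0 : ℂ) 1, r < ‖ζ‖ → ‖f ζ‖ ^ (q / 2) < ε := by
    obtain ⟨r, hr, hr_lt⟩ := hlim (ε ^ (q / 2)⁻¹) (by positivity)
    refine ⟨r, hr, fun ζ hζ hζr => ?_⟩
    exact (Real.lt_rpow_inv_iff_of_pos (norm_nonneg _) hε.le (by positivity)).1 (hr_lt ζ hζ hζr)
  have hpow_p (ζ : ℂ) : (‖f ζ‖ ^ (q / 2)) ^ (2 + 2 / (k * q)) = ‖f ζ‖ ^ p := by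
    rw [← Real.rpow_mul (norm_nonneg _), hp]
    congr 1
    field_simp
  have hpow_q (ζ : ℂ) : (‖f ζ‖ ^ (q / 2)) ^ 2 = ‖f ζ‖ ^ q := by
    rw [← Real.rpow_mul_natCast (norm_nonneg _)]
    congr 1
    push_cast
    field_simp
  have hqp : k * q / (k * q + 1) = q / p := by rw [hp]; field_simp
  have h := sobolev_of_tendsto_boundary (fun _ => by positivity) hlim' hdiff hkq
  simpa only [hpow_p, hpow_q, hqp] using h

theorem sharp_sobolev_inequality_general {E : Type*} [SeminormedAddCommGroup E]
    (k q p : ℝ) (hk : 1 / 2 < k) (hkq : 2 < k * q) (hp : p = q + 1 / k) (f : ℂ → E)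
    (hlim : ∀ ε > 0, ∃ r < 1, ∀ ζ ∈ ball (0 : ℂ) 1, r < ‖ζ‖ → ‖f ζ‖ < ε)
    (hdiff : ∀ ζ ∈ ball (0 : ℂ) 1, DifferentiableAt ℝ (fun z => ‖f z‖ ^ (q / 2)) ζ) :
    ENNReal.ofReal ((2 * k - 1) / (k * q - 1) * ((k * p - 1) / (2 * k - 1)) ^ (q / p)
          * ((k * q - 1) / (k * q - 2)))
        * (∫⁻ ζ, ENNReal.ofReal (‖f ζ‖ ^ p) ∂(nuMeasure k)) ^ (q / p)
      ≤ (∫⁻ ζ, ENNReal.ofReal (‖f ζ‖ ^ q) ∂(nuMeasure k))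
        + ENNReal.ofReal (4 / (k * q * (k * q - 2)) * ((2 * k - 1) / (4 * Real.pi)))
          * ∫⁻ ζ in ball (0 : ℂ) 1,
              ENNReal.ofReal (‖fderiv ℝ (fun z => ‖f z‖ ^ (q / 2)) ζ‖ ^ 2) := by
  have hk0 : 0 < k := by linarith
  have hκ : 0 < 2 * k - 1 := by linarith
  have hq : 0 < q := pos_of_mul_pos_right (by linarith) hk0.le
  have hp0 : 0 < p := hp ▸ by positivity
  have hs2 : 0 < k * q - 2 := by linarith
  have hsp : k * p - 1 = k * q := by rw [hp]; field_simp; ring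
  rw [lintegral_nuMeasure, lintegral_nuMeasure, hsp,
    sharp_constant_mul_rpow hκ hkq (by positivity)]
  refine (mul_le_mul_right (sobolev_norm_rpow hk0 hkq hp hlim hdiff) _).trans_eq ?_
  rw [mul_add, ← mul_assoc, ← mul_assoc, ← ENNReal.ofReal_mul (by positivity),
    ← ENNReal.ofReal_mul (by positivity), add_comm]
  congr 3 <;> field_simp

/-- Sharp Sobolev inequality on the hyperbolic plane (Theorem 3.2, inequality part):
for bounded `f` on the disc vanishing at the boundary, with `|f|^{q/2}` differentiable
with finite Dirichlet energy and `∫ |f|^p dν_k < ∞`, where `p = q + 1/k`,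
`∫|f|^q dν_k + (4/(kq(kq−2)))·((2k−1)/(4π))∫|∇|f|^{q/2}|² dA`
`  ≥ ((2k−1)/(kq−1))·((kp−1)/(2k−1))^{q/p}·((kq−1)/(kq−2))·(∫|f|^p dν_k)^{q/p}`.
(The left-hand side is interpreted in `[0,∞]` so that the inequality also covers the
case `∫ |f|^q dν_k = ∞`.) -/
theorem sharp_sobolev_inequality
    (k q p : ℝ) (hk : 1 / 2 < k) (hq : 2 ≤ q) (hkq : 2 < k * q)
    (hp : p = q + 1 / k)
    (f : ℂ → ℂ)
    (hbd : ∃ C, ∀ ζ ∈ ball (0 : ℂ) 1, ‖f ζ‖ ≤ C)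
    (hlim : ∀ ε > 0, ∃ r < 1, ∀ ζ ∈ ball (0 : ℂ) 1, r < ‖ζ‖ → ‖f ζ‖ < ε)
    (hdiff : ∀ ζ ∈ ball (0 : ℂ) 1, DifferentiableAt ℝ (fun z => ‖f z‖ ^ (q / 2)) ζ)
    (hgrad : ∫⁻ ζ in ball (0 : ℂ) 1,
        ENNReal.ofReal (‖fderiv ℝ (fun z => ‖f z‖ ^ (q / 2)) ζ‖ ^ 2) ≠ ⊤)
    (hLp : ∫⁻ ζ, ENNReal.ofReal (‖f ζ‖ ^ p) ∂(nuMeasure k) ≠ ⊤) :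
    ENNReal.ofReal ((2 * k - 1) / (k * q - 1) * ((k * p - 1) / (2 * k - 1)) ^ (q / p)
          * ((k * q - 1) / (k * q - 2)))
        * (∫⁻ ζ, ENNReal.ofReal (‖f ζ‖ ^ p) ∂(nuMeasure k)) ^ (q / p)
      ≤ (∫⁻ ζ, ENNReal.ofReal (‖f ζ‖ ^ q) ∂(nuMeasure k))
        + ENNReal.ofReal (4 / (k * q * (k * q - 2)) * ((2 * k - 1) / (4 * Real.pi)))
          * ∫⁻ ζ in ball (0 : ℂ) 1,
              ENNReal.ofReal (‖fderiv ℝ (fun z => ‖f z‖ ^ (q / 2)) ζ‖ ^ 2) :=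
  sharp_sobolev_inequality_general k q p hk hkq hp f hlim hdiff
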